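/- arXiv:1204.4513 — 3 statements merged into one kernel-verified Lean document; each statement's English description precedes it below -/
import Mathlib

section
/- Let (R, 𝔪, k) be a commutative noetherian local ring, M a nonzero finitely generated R-module, and x ∈ 𝔪 an element that is both R-regular and M-regular. Then AB-dim_{R/xR} (M/xM) = AB-dim_R M. -/
/-!
Write `S = R/xR` and `M/xM` for the reduction of `M`. The two terms of the AB-dimension are
compared separately.

For an `S`-module `N`, `Ext_S^n(M/xM, N)` and `Ext_R^n(M, N)` vanish together
(`extVanishes_reduction_iff`), because reducing a free resolution of `M` modulo `x` gives a free
resolution of `M/xM`. For an `R`-module `N` on which `x` is regular, the sequence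
`0 → N → N → N/xN → 0` and Nakayama's lemma show that `Ext_R^n(M, N/xN) = 0` forces
`Ext_R^n(M, N) = 0` (`extVanishes_of_reduction_right`), and conversely the vanishing of
`Ext_R^n(M, N)` and `Ext_R^{n+1}(M, N)` forces that of `Ext_R^n(M, N/xN)`. The same two facts,
applied to the dual and bidual, show that a finitely generated module on which `x` is regular is
totally reflexive over `R` if and only if its reduction is so over `S`
(`isTotallyReflexive_iff_reduction`).

G-dimension: a surjection from a finitely generated free module onto `M` with kernel `K` satisfies
`G-dim M ≤ n + 1 ↔ G-dim K ≤ n` (`gdimLE_succ_iff_of_free`), and such presentations reduce to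
presentations, so `G-dim_S (M/xM) = G-dim_R M` by induction (`gdimLE_reduction_iff`).

The supremum `P`: restricting scalars gives `P_S(M/xM) ≤ P_R(M)`. For the other direction the
G-dimension of `M` may be assumed finite, so that `Ext_R^n(M, F) = 0` for large `n` and every
finitely generated free `F`. Given a finitely generated `N` in `M^⊥`, its first syzygy `K` is also
in `M^⊥`, and `x` is `K`-regular; then `K/xK` is in `(M/xM)^⊥`, and for
`n > max (G-dim M) (P_S(M/xM))` the vanishing of `Ext_S^{n+1}(M/xM, K/xK)` gives that of
`Ext_R^{n+1}(M, K)` and hence that of `Ext_R^n(M, N)`.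
-/

open CategoryTheory IsLocalRing

noncomputable section

universe u

variable (R : Type u) [CommRing R]

/-- The Ext group `Ext^n_R(M, N)` vanishes. -/
def ExtVanishes (M : Type u) [AddCommGroup M] [Module R M]
    (N : Type u) [AddCommGroup N] [Module R N] (n : ℕ) : Prop :=
  Subsingleton (((Ext R (ModuleCat.{u} R) n).obj
    (Opposite.op (ModuleCat.of R M))).obj (ModuleCat.of R N))

/-- `N ∈ M^⊥`, i.e. `Ext^n_R(M,N) = 0` for all sufficiently large `n`. -/
def MemPerp (M : Type u) [AddCommGroup M] [Module R M]
    (N : Type u) [AddCommGroup N] [Module R N] : Prop :=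
  ∃ d : ℕ, ∀ n ≥ d, ExtVanishes R M N n

/-- `P_R(M,N) = sup { n | Ext^n_R(M,N) ≠ 0 }`, an element of `{-∞} ∪ ℕ ∪ {∞}`;
it is `⊥ = -∞` when every `Ext^n_R(M,N)` vanishes. -/
def extP (M : Type u) [AddCommGroup M] [Module R M]
    (N : Type u) [AddCommGroup N] [Module R N] : WithBot ℕ∞ :=
  sSup {x : WithBot ℕ∞ | ∃ n : ℕ, ¬ ExtVanishes R M N n ∧ x = (n : ℕ∞)}

/-- `P_R(M) = sup { P_R(M,N) | N ∈ M^⊥ }`, the sup being taken over all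
finitely generated modules in `M^⊥`. -/
def extPsup (M : Type u) [AddCommGroup M] [Module R M] : WithBot ℕ∞ :=
  sSup {x : WithBot ℕ∞ | ∃ (N : Type u) (_ : AddCommGroup N) (_ : Module R N),
    Module.Finite R N ∧ MemPerp R M N ∧ x = extP R M N}

/-- A module `G` is totally reflexive if the biduality map `G → G**` is bijective and
`Ext^n_R(G,R) = 0 = Ext^n_R(G*,R)` for all `n > 0`. -/
def IsTotallyReflexive (G : Type u) [AddCommGroup G] [Module R G] : Prop :=
  Function.Bijective (Module.Dual.eval R G) ∧
    (∀ n > 0, ExtVanishes R G R n) ∧ (∀ n > 0, ExtVanishes R (Module.Dual R G) R n)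

/-- `G-dim_R M ≤ n`: there is a resolution of `M` of length `n` by finitely generated
totally reflexive modules. -/
def GdimLE : ℕ → ModuleCat.{u} R → Prop
  | 0, M => IsTotallyReflexive R M
  | n + 1, M => ∃ G : ModuleCat.{u} R, Module.Finite R G ∧ IsTotallyReflexive R G ∧
      ∃ f : G →ₗ[R] M, Function.Surjective f ∧ GdimLE n (ModuleCat.of R (LinearMap.ker f))

/-- The G-dimension of `M`, as an element of `ℕ∞`. -/
def gdim (M : Type u) [AddCommGroup M] [Module R M] : ℕ∞ :=
  sInf {x : ℕ∞ | ∃ n : ℕ, GdimLE R n (ModuleCat.of R M) ∧ x = n}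

/-- `pd_R M ≤ n`: there is a projective resolution of `M` of length `n` by finitely
generated projective modules. -/
def ProjDimLE : ℕ → ModuleCat.{u} R → Prop
  | 0, M => Module.Projective R M
  | n + 1, M => ∃ P : ModuleCat.{u} R, Module.Finite R P ∧ Module.Projective R P ∧
      ∃ f : P →ₗ[R] M, Function.Surjective f ∧ ProjDimLE n (ModuleCat.of R (LinearMap.ker f))

/-- The projective dimension of `M`, as an element of `ℕ∞`. -/
def projdim (M : Type u) [AddCommGroup M] [Module R M] : ℕ∞ :=
  sInf {x : ℕ∞ | ∃ n : ℕ, ProjDimLE R n (ModuleCat.of R M) ∧ x = n}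

/-- `injdim_R M ≤ n`: there is an injective resolution of `M` of length `n`. -/
def InjDimLE : ℕ → ModuleCat.{u} R → Prop
  | 0, M => Module.Injective R M
  | n + 1, M => ∃ I : ModuleCat.{u} R, Module.Injective R I ∧
      ∃ f : M →ₗ[R] I, Function.Injective f ∧
        InjDimLE n (ModuleCat.of R (I ⧸ LinearMap.range f))

/-- `R` is Gorenstein: `R` has finite injective dimension as a module over itself. -/
def IsGorensteinRing : Prop := ∃ n : ℕ, InjDimLE R n (ModuleCat.of R R)

/-- `AB-dim_R M = sup { G-dim_R M, P_R(M) }`. -/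
def abdim (M : Type u) [AddCommGroup M] [Module R M] : WithBot ℕ∞ :=
  max ((gdim R M : ℕ∞) : WithBot ℕ∞) (extPsup R M)

/-- The depth of `M`: the length of a maximal `M`-regular sequence contained in the
maximal ideal (expressed as the sup of lengths of such regular sequences). -/
def rdepth [IsLocalRing R] (M : Type u) [AddCommGroup M] [Module R M] : ℕ∞ :=
  sSup {x : ℕ∞ | ∃ rs : List R, (∀ r ∈ rs, r ∈ maximalIdeal R) ∧
    RingTheory.Sequence.IsRegular M rs ∧ x = rs.length}

/-- `S` is a first syzygy `Ω M` of `M`: the kernel of a minimal free cover of `M`. -/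
def IsSyzygyOf [IsLocalRing R] (S M : ModuleCat.{u} R) : Prop :=
  ∃ F : ModuleCat.{u} R, Module.Free R F ∧ Module.Finite R F ∧
    ∃ π : F →ₗ[R] M, Function.Surjective π ∧
      LinearMap.ker π ≤ (maximalIdeal R) • (⊤ : Submodule R F) ∧
      Nonempty (S ≃ₗ[R] LinearMap.ker π)

/-- `S` is an `n`-th syzygy `Ω^n M` of `M`. -/
def IsNthSyzygyOf [IsLocalRing R] : ℕ → ModuleCat.{u} R → ModuleCat.{u} R → Prop
  | 0, S, M => Nonempty (S ≃ₗ[R] M)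
  | n + 1, S, M => ∃ T : ModuleCat.{u} R, IsSyzygyOf R T M ∧ IsNthSyzygyOf n S T

end

/-! ### Vanishing of Ext and short exact sequences -/

section ExtBasics
universe u
variable {R : Type u} [CommRing R]

lemma extVanishes_iff_resolution {M N : Type u} [AddCommGroup M] [Module R M]
    [AddCommGroup N] [Module R N] (P : ProjectiveResolution (ModuleCat.of R M)) (n : ℕ) :
    ExtVanishes R M N n ↔ (P.complex.linearYonedaObj R (ModuleCat.of R N)).ExactAt n := by
  rw [ExtVanishes, HomologicalComplex.exactAt_iff_isZero_homology,
    ← (P.isoExt n (ModuleCat.of R N)).isZero_iff, ModuleCat.isZero_iff_subsingleton]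

/-- Vanishing of the derived-functor `Ext` agrees with vanishing of `Abelian.Ext`. -/
lemma extVanishes_iff {M N : Type u} [AddCommGroup M] [Module R M]
    [AddCommGroup N] [Module R N] (n : ℕ) :
    ExtVanishes R M N n ↔
      Subsingleton (Abelian.Ext (ModuleCat.of R M) (ModuleCat.of R N) n) := by
  let P := projectiveResolution (ModuleCat.of R M)
  rw [extVanishes_iff_resolution P]
  cases n with
  | zero =>
    rw [HomologicalComplex.exactAt_iff' _ 0 0 1 (by simp) (by simp),
      ShortComplex.moduleCat_exact_iff]
    constructor
    · intro h
      refine subsingleton_of_forall_eq 0 fun α => ?_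
      obtain ⟨f, hf, rfl⟩ := P.extMk_surjective α 1 rfl
      obtain ⟨g, hg⟩ := h f hf
      have hf0 : f = 0 := by
        rw [← hg]
        change P.complex.d 0 0 ≫ g = 0
        rw [P.complex.shape 0 0 (by simp)]
        exact Limits.zero_comp
      subst hf0
      exact P.extMk_zero 1 rfl
    · intro h f hf
      have hf : P.complex.d 1 0 ≫ f = 0 := hf
      have e : P.π.f 0 ≫ P.exact₀.desc f hf = f := P.exact₀.g_desc f hf
      have h0 : P.exact₀.desc f hf = 0 :=
        Abelian.Ext.addEquiv₀.symm.injective (@Subsingleton.elim _ h _ _)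
      rw [h0] at e
      exact ⟨0, by rw [map_zero]; exact Limits.comp_zero.symm.trans e⟩
  | succ p =>
    rw [HomologicalComplex.exactAt_iff' _ p (p+1) (p+2) (by simp) (by simp),
      ShortComplex.moduleCat_exact_iff]
    constructor
    · intro h
      refine subsingleton_of_forall_eq 0 fun α => ?_
      obtain ⟨f, hf, rfl⟩ := P.extMk_surjective α (p+2) rfl
      rw [P.extMk_eq_zero_iff f (p+2) rfl hf p rfl]
      exact h f hf
    · intro h f hf
      exact (P.extMk_eq_zero_iff f (p+2) rfl hf p rfl).1 (Subsingleton.elim _ _)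

variable {A B C M N P : Type u} [AddCommGroup A] [Module R A] [AddCommGroup B] [Module R B]
  [AddCommGroup C] [Module R C] [AddCommGroup M] [Module R M] [AddCommGroup N] [Module R N]
  [AddCommGroup P] [Module R P]

lemma shortExact_of_linear {f : A →ₗ[R] B} {g : B →ₗ[R] C} (hf : Function.Injective f)
    (hfg : Function.Exact f g) (hg : Function.Surjective g) :
    (ShortComplex.mk (ModuleCat.ofHom f) (ModuleCat.ofHom g)
      (by ext a; exact hfg.apply_apply_eq_zero a)).ShortExact where
  exact := by
    rw [ShortComplex.moduleCat_exact_iff]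
    exact fun b hb => (hfg b).1 hb
  mono_f := by rw [ModuleCat.mono_iff_injective]; exact hf
  epi_g := by rw [ModuleCat.epi_iff_surjective]; exact hg

lemma extVanishes_zero_iff : ExtVanishes R M N 0 ↔ ∀ f : M →ₗ[R] N, f = 0 := by
  rw [extVanishes_iff, Abelian.Ext.addEquiv₀.subsingleton_congr,
    ModuleCat.homEquiv.subsingleton_congr, subsingleton_iff_forall_eq 0]

lemma extVanishes_of_projective [Module.Projective R P] (n : ℕ) : ExtVanishes R P N (n + 1) := by
  rw [extVanishes_iff]
  have : Projective (ModuleCat.of R P) := (IsProjective.iff_projective P).1 inferInstance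
  exact Abelian.Ext.subsingleton_of_projective _ _ _

section Sequence
variable {f : A →ₗ[R] B} {g : B →ₗ[R] C} (hf : Function.Injective f)
    (hfg : Function.Exact f g) (hg : Function.Surjective g)
include hf hfg hg

lemma extVanishes_contra_mid {n : ℕ} (hA : ExtVanishes R A N n) (hC : ExtVanishes R C N n) :
    ExtVanishes R B N n := by
  rw [extVanishes_iff] at *
  refine subsingleton_of_forall_eq 0 fun α => ?_
  obtain ⟨β, rfl⟩ := Abelian.Ext.contravariant_sequence_exact₂ (shortExact_of_linear hf hfg hg) _ α
    (@Subsingleton.elim _ hA _ _)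
  rw [@Subsingleton.elim _ hC β 0, Abelian.Ext.comp_zero]

lemma extVanishes_contra_right {n : ℕ} (hA : ExtVanishes R A N n)
    (hB : ExtVanishes R B N (n + 1)) : ExtVanishes R C N (n + 1) := by
  rw [extVanishes_iff] at *
  refine subsingleton_of_forall_eq 0 fun α => ?_
  obtain ⟨β, rfl⟩ := Abelian.Ext.contravariant_sequence_exact₃ (shortExact_of_linear hf hfg hg) _ α
    (@Subsingleton.elim _ hB _ _) (add_comm 1 n)
  rw [@Subsingleton.elim _ hA β 0, Abelian.Ext.comp_zero]

lemma extVanishes_contra_left {n : ℕ} (hB : ExtVanishes R B N n)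
    (hC : ExtVanishes R C N (n + 1)) : ExtVanishes R A N n := by
  rw [extVanishes_iff] at *
  refine subsingleton_of_forall_eq 0 fun α => ?_
  obtain ⟨β, rfl⟩ := Abelian.Ext.contravariant_sequence_exact₁ (shortExact_of_linear hf hfg hg) _ α
    (add_comm 1 n) (@Subsingleton.elim _ hC _ _)
  rw [@Subsingleton.elim _ hB β 0, Abelian.Ext.comp_zero]

lemma extVanishes_co_mid {n : ℕ} (hA : ExtVanishes R M A n) (hC : ExtVanishes R M C n) :
    ExtVanishes R M B n := by
  rw [extVanishes_iff] at *
  refine subsingleton_of_forall_eq 0 fun α => ?_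
  obtain ⟨β, rfl⟩ := Abelian.Ext.covariant_sequence_exact₂ _ (shortExact_of_linear hf hfg hg) α
    (@Subsingleton.elim _ hC _ _)
  rw [@Subsingleton.elim _ hA β 0, Abelian.Ext.zero_comp]

lemma extVanishes_co_right {n : ℕ} (hB : ExtVanishes R M B n) (hA : ExtVanishes R M A (n + 1)) :
    ExtVanishes R M C n := by
  rw [extVanishes_iff] at *
  refine subsingleton_of_forall_eq 0 fun α => ?_
  obtain ⟨β, rfl⟩ := Abelian.Ext.covariant_sequence_exact₃ _ (shortExact_of_linear hf hfg hg) α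
    rfl (@Subsingleton.elim _ hA _ _)
  rw [@Subsingleton.elim _ hB β 0, Abelian.Ext.zero_comp]

lemma extVanishes_co_left {n : ℕ} (hC : ExtVanishes R M C n) (hB : ExtVanishes R M B (n + 1)) :
    ExtVanishes R M A (n + 1) := by
  rw [extVanishes_iff] at *
  refine subsingleton_of_forall_eq 0 fun α => ?_
  obtain ⟨β, rfl⟩ := Abelian.Ext.covariant_sequence_exact₁ _ (shortExact_of_linear hf hfg hg) α
    (@Subsingleton.elim _ hB _ _) rfl
  rw [@Subsingleton.elim _ hC β 0, Abelian.Ext.zero_comp]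

lemma exists_extend_of_extVanishes (hC : ExtVanishes R C N 1) (φ : A →ₗ[R] N) :
    ∃ ψ : B →ₗ[R] N, ψ ∘ₗ f = φ := by
  rw [extVanishes_iff] at hC
  obtain ⟨β, hβ⟩ := Abelian.Ext.contravariant_sequence_exact₁ (shortExact_of_linear hf hfg hg) _
    (Abelian.Ext.mk₀ (ModuleCat.ofHom φ)) (add_zero 1) (@Subsingleton.elim _ hC _ _)
  obtain ⟨b, rfl⟩ := Abelian.Ext.addEquiv₀.symm.surjective β
  refine ⟨b.hom, ?_⟩
  have h : ModuleCat.ofHom f ≫ b = ModuleCat.ofHom φ :=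
    Abelian.Ext.addEquiv₀.symm.injective (by simpa using hβ)
  simpa using congrArg ModuleCat.Hom.hom h

lemma exists_lift_of_extVanishes (hA : ExtVanishes R M A 1) (φ : M →ₗ[R] C) :
    ∃ ψ : M →ₗ[R] B, g ∘ₗ ψ = φ := by
  rw [extVanishes_iff] at hA
  obtain ⟨β, hβ⟩ := Abelian.Ext.covariant_sequence_exact₃ _ (shortExact_of_linear hf hfg hg)
    (Abelian.Ext.mk₀ (ModuleCat.ofHom φ)) (zero_add 1) (@Subsingleton.elim _ hA _ _)
  obtain ⟨b, rfl⟩ := Abelian.Ext.addEquiv₀.symm.surjective β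
  refine ⟨b.hom, ?_⟩
  have h : b ≫ ModuleCat.ofHom g = ModuleCat.ofHom φ :=
    Abelian.Ext.addEquiv₀.symm.injective (by simpa using hβ)
  simpa using congrArg ModuleCat.Hom.hom h

/-- If `Ext^1(B, N) = 0` and every map `A → N` extends to `B`, then `Ext^1(C, N) = 0`. -/
lemma extVanishes_one_of_extend (hB : ExtVanishes R B N 1)
    (h : ∀ φ : A →ₗ[R] N, ∃ ψ : B →ₗ[R] N, ψ ∘ₗ f = φ) : ExtVanishes R C N 1 := by
  rw [extVanishes_iff] at *
  refine subsingleton_of_forall_eq 0 fun α => ?_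
  obtain ⟨β, rfl⟩ := Abelian.Ext.contravariant_sequence_exact₃ (shortExact_of_linear hf hfg hg) _ α
    (@Subsingleton.elim _ hB _ _) (add_zero 1)
  obtain ⟨b, rfl⟩ := Abelian.Ext.addEquiv₀.symm.surjective β
  obtain ⟨ψ, hψ⟩ := h b.hom
  have hb : b = ModuleCat.ofHom f ≫ ModuleCat.ofHom ψ := by
    ext a; exact (LinearMap.congr_fun hψ a).symm
  rw [hb]
  have := Abelian.Ext.mk₀_comp_mk₀ (ModuleCat.ofHom f) (ModuleCat.ofHom ψ)
  rw [Abelian.Ext.addEquiv₀_symm_apply, ← this]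
  exact Abelian.Ext.comp_assoc_of_second_deg_zero .. |>.symm.trans
    (by rw [ShortComplex.ShortExact.extClass_comp (shortExact_of_linear hf hfg hg),
          Abelian.Ext.zero_comp])

lemma extVanishes_one_iff_of_projective [Module.Projective R B] :
    ExtVanishes R C N 1 ↔ ∀ φ : A →ₗ[R] N, ∃ ψ : B →ₗ[R] N, ψ ∘ₗ f = φ :=
  ⟨fun h φ => exists_extend_of_extVanishes hf hfg hg h φ,
   fun h => extVanishes_one_of_extend hf hfg hg (extVanishes_of_projective 0) h⟩

lemma extVanishes_succ_iff_of_projective [Module.Projective R B] (n : ℕ) :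
    ExtVanishes R C N (n + 2) ↔ ExtVanishes R A N (n + 1) :=
  ⟨extVanishes_contra_left hf hfg hg (extVanishes_of_projective n),
   fun h => extVanishes_contra_right hf hfg hg h (extVanishes_of_projective (n + 1))⟩

end Sequence

lemma extVanishes_congr_left (e : A ≃ₗ[R] B) {n : ℕ} (h : ExtVanishes R A N n) :
    ExtVanishes R B N n :=
  extVanishes_contra_mid (C := PUnit.{u+1}) (f := e.toLinearMap) (g := 0) e.injective
    (by intro b; simp) (fun _ => ⟨0, rfl⟩) h
    (by
      cases n with
      | zero =>
        rw [extVanishes_zero_iff]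
        intro f
        ext y
        rw [Subsingleton.elim y 0, map_zero, map_zero]
      | succ n => exact extVanishes_of_projective n)

/-- `Ext^n(M, -)` vanishes on a finite power of a module as soon as it vanishes on the module. -/
lemma extVanishes_pi {n : ℕ} (h : ExtVanishes R M N n) (m : ℕ) :
    ExtVanishes R M (Fin m → N) n := by
  induction m with
  | zero =>
    rw [extVanishes_iff] at *
    have : Limits.IsZero (ModuleCat.of R (Fin 0 → N)) := by
      rw [ModuleCat.isZero_iff_subsingleton]; infer_instance
    refine subsingleton_of_forall_eq 0 fun α => ?_
    rw [← Abelian.Ext.comp_mk₀_id α, this.eq_of_src (𝟙 _) 0, Abelian.Ext.mk₀_zero,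
      Abelian.Ext.comp_zero]
  | succ m ih =>
    refine extVanishes_co_mid (f := (Fin.consLinearEquiv R (fun _ : Fin (m+1) => N)).toLinearMap ∘ₗ
      LinearMap.inr R N (Fin m → N)) (g := LinearMap.proj 0) ?_ ?_ ?_ ih h
    · exact (Fin.consLinearEquiv R (fun _ : Fin (m+1) => N)).injective.comp LinearMap.inr_injective
    · intro v
      constructor
      · intro hv
        refine ⟨Fin.tail v, ?_⟩
        have hv : v 0 = 0 := hv
        ext i
        refine Fin.cases ?_ (fun j => ?_) i
        · simp [hv]
        · simp [Fin.tail]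
      · rintro ⟨w, rfl⟩; simp
    · intro y; exact ⟨fun _ => y, rfl⟩

lemma extVanishes_congr_right (e : A ≃ₗ[R] B) {n : ℕ} (h : ExtVanishes R M A n) :
    ExtVanishes R M B n := by
  refine extVanishes_co_mid (C := Fin 0 → A) (f := e.toLinearMap) (g := 0) e.injective
    (by intro b; simp) (fun _ => ⟨0, Subsingleton.elim _ _⟩) h
    (extVanishes_pi h 0)

end ExtBasics

/-! ### Reduction modulo a regular element -/

section Reduction
set_option linter.unusedSectionVars false
universe u
variable {R : Type u} [CommRing R]

/-- `IsReduction x π` says that `π : A → A'` exhibits `A'` as `A / xA`: it is surjective with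
kernel `xA`. -/
structure IsReduction (x : R) {A A' : Type u} [AddCommGroup A] [Module R A] [AddCommGroup A']
    [Module R A'] (π : A →ₗ[R] A') : Prop where
  surjective : Function.Surjective π
  map_smul_eq_zero : ∀ a, π (x • a) = 0
  exists_of_map_eq_zero : ∀ a, π a = 0 → ∃ b, a = x • b

variable {S : Type u} [CommRing S] [Algebra R S] {x : R}
variable {A B C M N A' B' C' M' : Type u} [AddCommGroup A] [Module R A] [AddCommGroup B]
  [Module R B] [AddCommGroup C] [Module R C] [AddCommGroup M] [Module R M]
  [AddCommGroup N] [Module R N] [Module S N] [IsScalarTower R S N]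
  [AddCommGroup A'] [Module R A'] [Module S A'] [IsScalarTower R S A']
  [AddCommGroup B'] [Module R B'] [Module S B'] [IsScalarTower R S B']
  [AddCommGroup C'] [Module R C'] [Module S C'] [IsScalarTower R S C']
  [AddCommGroup M'] [Module R M'] [Module S M'] [IsScalarTower R S M']

/-- `x` annihilates every `S`-module. -/
lemma smul_eq_zero_of_reduction (hS : IsReduction x (Algebra.linearMap R S)) (n : N) :
    x • n = 0 := by
  have h := hS.map_smul_eq_zero 1
  rw [smul_eq_mul, mul_one, Algebra.linearMap_apply] at h
  rw [← algebraMap_smul S x n, h, zero_smul]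

/-- `S ⊗ A` is the reduction of `A` modulo `x`. -/
lemma isReduction_tensor (hS : IsReduction x (Algebra.linearMap R S)) :
    IsReduction x (TensorProduct.mk R S A 1) where
  surjective := by
    intro t
    induction t with
    | zero => exact ⟨0, map_zero _⟩
    | tmul s a =>
      obtain ⟨r, rfl⟩ := hS.surjective s
      refine ⟨r • a, ?_⟩
      rw [TensorProduct.mk_apply, TensorProduct.tmul_smul, TensorProduct.smul_tmul',
        Algebra.linearMap_apply, Algebra.algebraMap_eq_smul_one]
    | add s t hs ht =>
      obtain ⟨a, rfl⟩ := hs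
      obtain ⟨b, rfl⟩ := ht
      exact ⟨a + b, map_add _ _ _⟩
  map_smul_eq_zero a := by
    rw [map_smul]; exact smul_eq_zero_of_reduction (S := S) (N := TensorProduct R S A) hS _
  exists_of_map_eq_zero a ha := by
    have hex : Function.Exact (LinearMap.lsmul R R x) (Algebra.linearMap R S) := by
      intro r
      constructor
      · intro h
        obtain ⟨b, rfl⟩ := hS.exists_of_map_eq_zero r h
        exact ⟨b, rfl⟩
      · rintro ⟨b, rfl⟩
        exact hS.map_smul_eq_zero b
    have := rTensor_exact A hex hS.surjective
    have h0 : LinearMap.rTensor A (Algebra.linearMap R S) (1 ⊗ₜ[R] a) = 0 := by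
      simpa using ha
    obtain ⟨t, ht⟩ := (this _).1 h0
    refine ⟨TensorProduct.lid R A t, ?_⟩
    have key : ∀ t : TensorProduct R R A, TensorProduct.lid R A
        (LinearMap.rTensor A (LinearMap.lsmul R R x) t) = x • TensorProduct.lid R A t := by
      intro t
      induction t with
      | zero => simp
      | tmul r a => simp [mul_smul]
      | add s t hs ht => simp [hs, ht]
    rw [← key, ht, TensorProduct.lid_tmul, one_smul]

variable (A) in
lemma exists_reduction (hS : IsReduction x (Algebra.linearMap R S)) :
    ∃ (A' : Type u) (_ : AddCommGroup A') (_ : Module R A') (_ : Module S A')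
      (_ : IsScalarTower R S A') (π : A →ₗ[R] A'), IsReduction x π ∧
      (Module.Free R A → Module.Free S A') ∧ (Module.Finite R A → Module.Finite S A') :=
  ⟨TensorProduct R S A, inferInstance, inferInstance, inferInstance, inferInstance,
    TensorProduct.mk R S A 1, isReduction_tensor hS, fun _ => inferInstance,
    fun _ => inferInstance⟩

/-- An `R`-linear map from `A` to an `S`-module factors through the reduction of `A`. -/
lemma IsReduction.exists_desc {π : A →ₗ[R] A'} (hπ : IsReduction x π)
    (hS : IsReduction x (Algebra.linearMap R S)) (g : A →ₗ[R] N) :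
    ∃ g' : A' →ₗ[S] N, ∀ a, g' (π a) = g a := by
  have hker : LinearMap.ker π ≤ LinearMap.ker g := by
    intro a ha
    obtain ⟨b, rfl⟩ := hπ.exists_of_map_eq_zero a ha
    rw [LinearMap.mem_ker, map_smul]
    exact smul_eq_zero_of_reduction (S := S) hS _
  let h : A' →ₗ[R] N := (LinearMap.ker π).liftQ g hker ∘ₗ
    (π.quotKerEquivOfSurjective hπ.surjective).symm.toLinearMap
  refine ⟨h.extendScalarsOfSurjective hS.surjective, fun a => ?_⟩
  change (LinearMap.ker π).liftQ g hker ((π.quotKerEquivOfSurjective hπ.surjective).symm (π a)) = _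
  have : (π.quotKerEquivOfSurjective hπ.surjective).symm (π a) = Submodule.Quotient.mk a := by
    rw [LinearEquiv.symm_apply_eq]; rfl
  rw [this]
  exact Submodule.liftQ_apply _ _ _

lemma IsReduction.hom_ext {π : A →ₗ[R] A'} (hπ : IsReduction x π) {g h : A' →ₗ[S] N}
    (H : ∀ a, g (π a) = h (π a)) : g = h := by
  ext a'
  obtain ⟨a, rfl⟩ := hπ.surjective a'
  exact H a

/-- If `0 → A → B → C → 0` is exact and `x` is `C`-regular, then reduction modulo `x` keeps
the sequence exact. -/
lemma IsReduction.ker {i : A →ₗ[R] B} {f : B →ₗ[R] C} (hi : Function.Injective i)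
    (hif : Function.Exact i f) (hf : Function.Surjective f) (hC : IsSMulRegular C x)
    {πB : B →ₗ[R] B'} {πC : C →ₗ[R] C'} (hB : IsReduction x πB) (hC' : IsReduction x πC)
    (f' : B' →ₗ[S] C') (hf' : ∀ b, f' (πB b) = πC (f b)) :
    Function.Surjective f' ∧ ∃ πA : A →ₗ[R] LinearMap.ker f', IsReduction x πA ∧
      ∀ a, (πA a : B') = πB (i a) := by
  refine ⟨fun c' => ?_, ?_⟩
  · obtain ⟨c, rfl⟩ := hC'.surjective c'
    obtain ⟨b, rfl⟩ := hf c
    exact ⟨πB b, hf' b⟩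
  · let πA : A →ₗ[R] LinearMap.ker f' := LinearMap.codRestrict
      ((LinearMap.ker f').restrictScalars R) (πB ∘ₗ i) (fun a => by
        change f' (πB (i a)) = 0
        rw [hf', hif.apply_apply_eq_zero, map_zero])
    have hA : ∀ a, (πA a : B') = πB (i a) := fun a => rfl
    refine ⟨πA, ⟨?_, ?_, ?_⟩, hA⟩
    · rintro ⟨b', hb'⟩
      obtain ⟨b, rfl⟩ := hB.surjective b'
      have h1 : πC (f b) = 0 := by rw [← hf']; exact hb'
      obtain ⟨c, hc⟩ := hC'.exists_of_map_eq_zero _ h1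
      obtain ⟨b2, rfl⟩ := hf c
      have h2 : f (b - x • b2) = 0 := by rw [map_sub, map_smul, hc, sub_self]
      obtain ⟨a, ha⟩ := (hif _).1 h2
      refine ⟨a, Subtype.ext ?_⟩
      rw [hA, ha, map_sub, hB.map_smul_eq_zero, sub_zero]
    · intro a
      apply Subtype.ext
      rw [hA, map_smul, hB.map_smul_eq_zero]; rfl
    · intro a ha
      have h1 : πB (i a) = 0 := by rw [← hA, ha]; rfl
      obtain ⟨b, hb⟩ := hB.exists_of_map_eq_zero _ h1
      have h2 : f b = 0 := by
        apply hC
        change x • f b = x • (0 : C)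
        rw [← map_smul, ← hb, hif.apply_apply_eq_zero, smul_zero]
      obtain ⟨a2, rfl⟩ := (hif _).1 h2
      exact ⟨a2, hi (by rw [hb, map_smul])⟩

lemma isSMulRegular_of_injective {f : A →ₗ[R] B} (hf : Function.Injective f)
    (hB : IsSMulRegular B x) : IsSMulRegular A x := by
  intro a b h
  have h : x • a = x • b := h
  exact hf (hB (by change x • f a = x • f b; rw [← map_smul, h, map_smul]))

lemma isSMulRegular_of_free [Module.Free R A] (hR : IsSMulRegular R x) : IsSMulRegular A x := by
  intro a b h
  let e := (Module.Free.chooseBasis R A).repr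
  refine e.injective (Finsupp.ext fun i => hR ?_)
  have h2 : e (x • a) = e (x • b) := congrArg e h
  rw [map_smul, map_smul] at h2
  exact DFunLike.congr_fun h2 i

variable (R M) in
lemma exists_free_cover : ∃ (F : Type u) (_ : AddCommGroup F) (_ : Module R F)
    (_ : Module.Free R F) (f : F →ₗ[R] M), Function.Surjective f :=
  ⟨M →₀ R, inferInstance, inferInstance, inferInstance, Finsupp.linearCombination R id,
    Finsupp.linearCombination_id_surjective R M⟩

/-- Change of rings: `Ext_S^n(M/xM, N) = 0` if and only if `Ext_R^n(M, N) = 0` for every module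
`N` over `S = R/xR`, when `x` is regular on `R` and `M`. -/
lemma extVanishes_reduction_iff (hS : IsReduction x (Algebra.linearMap R S))
    (hR : IsSMulRegular R x) (n : ℕ) {M M' : Type u} [AddCommGroup M] [Module R M]
    [AddCommGroup M'] [Module R M'] [Module S M'] [IsScalarTower R S M']
    (hM : IsSMulRegular M x) {π : M →ₗ[R] M'} (hπ : IsReduction x π) :
    ExtVanishes S M' N n ↔ ExtVanishes R M N n := by
  induction n generalizing M M' with
  | zero =>
    rw [extVanishes_zero_iff, extVanishes_zero_iff]
    constructor
    · intro h g
      obtain ⟨g', hg'⟩ := hπ.exists_desc hS g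
      ext m
      rw [← hg', h g']; rfl
    · intro h g
      refine hπ.hom_ext fun a => ?_
      exact LinearMap.congr_fun (h (g.restrictScalars R ∘ₗ π)) a
  | succ n ih =>
    obtain ⟨F, _, _, _, f, hf⟩ := exists_free_cover R M
    have hi : Function.Injective (LinearMap.ker f).subtype := Subtype.val_injective
    have hif : Function.Exact (LinearMap.ker f).subtype f := LinearMap.exact_subtype_ker_map f
    obtain ⟨F', _, _, _, _, πF, hF, hFfree, -⟩ := exists_reduction F hS
    have := hFfree inferInstance
    obtain ⟨f', hf'⟩ := hF.exists_desc hS (π ∘ₗ f)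
    obtain ⟨hfs, πK, hπK, hK⟩ := IsReduction.ker hi hif hf hM hF hπ f' hf'
    have hi' : Function.Injective (LinearMap.ker f').subtype := Subtype.val_injective
    have hif' : Function.Exact (LinearMap.ker f').subtype f' := LinearMap.exact_subtype_ker_map f'
    have hKreg : IsSMulRegular (LinearMap.ker f) x :=
      isSMulRegular_of_injective hi (isSMulRegular_of_free hR)
    cases n with
    | zero =>
      rw [extVanishes_one_iff_of_projective hi hif hf,
        extVanishes_one_iff_of_projective hi' hif' hfs]
      constructor
      · intro h φ
        obtain ⟨φ', hφ'⟩ := hπK.exists_desc hS φ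
        obtain ⟨ψ', hψ'⟩ := h φ'
        refine ⟨ψ'.restrictScalars R ∘ₗ πF, ?_⟩
        ext a
        rw [← hφ' a, ← hψ']
        change ψ' _ = ψ' (πK a : _)
        rw [hK]
      · intro h φ'
        obtain ⟨ψ, hψ⟩ := h (φ'.restrictScalars R ∘ₗ πK)
        obtain ⟨ψ', hψ'⟩ := hF.exists_desc hS ψ
        refine ⟨ψ', hπK.hom_ext fun a => ?_⟩
        change ψ' (πK a : _) = _
        rw [hK, hψ']
        exact LinearMap.congr_fun hψ a
    | succ n =>
      rw [extVanishes_succ_iff_of_projective hi hif hf,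
        extVanishes_succ_iff_of_projective hi' hif' hfs]
      exact ih hKreg hπK

section Ext
variable {N N' : Type u} [AddCommGroup N] [Module R N] [AddCommGroup N'] [Module R N']
  {π : N →ₗ[R] N'} (hπ : IsReduction x π) (hN : IsSMulRegular N x)
include hπ

lemma IsReduction.exact : Function.Exact (LinearMap.lsmul R N x) π := by
  intro n
  constructor
  · intro h
    obtain ⟨b, rfl⟩ := hπ.exists_of_map_eq_zero n h
    exact ⟨b, rfl⟩
  · rintro ⟨b, rfl⟩
    exact hπ.map_smul_eq_zero b

include hN

/-- If `x` is `N`-regular and `Ext^n(M, N/xN) = 0`, then `x` acts surjectively on the finitely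
generated module `Ext^n(M, N)`, which is therefore zero by Nakayama's lemma. -/
lemma extVanishes_of_reduction_right [IsLocalRing R] [IsNoetherianRing R] [Module.Finite R M]
    [Module.Finite R N] (hx : x ∈ maximalIdeal R) {n : ℕ} (h : ExtVanishes R M N' n) :
    ExtVanishes R M N n := by
  rw [extVanishes_iff] at *
  have hse := shortExact_of_linear (f := LinearMap.lsmul R N x) hN hπ.exact hπ.surjective
  have key : (⊤ : Submodule R (Abelian.Ext (ModuleCat.of R M) (ModuleCat.of R N) n)) ≤
      Ideal.span {x} • ⊤ := by
    intro α _
    obtain ⟨β, rfl⟩ := Abelian.Ext.covariant_sequence_exact₂ _ hse α (@Subsingleton.elim _ h _ _)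
    have e : ModuleCat.ofHom (LinearMap.lsmul R N x) = x • 𝟙 (ModuleCat.of R N) := by
      ext; rfl
    change β.comp (Abelian.Ext.mk₀ (ModuleCat.ofHom (LinearMap.lsmul R N x))) _ ∈ _
    simp only [e]
    rw [Abelian.Ext.mk₀_smul, Abelian.Ext.comp_smul, Abelian.Ext.comp_mk₀_id]
    exact Submodule.smul_mem_smul (Ideal.mem_span_singleton_self x) trivial
  have := Submodule.eq_bot_of_le_smul_of_le_jacobson_bot _ _ Module.Finite.fg_top key (by
    rw [IsLocalRing.jacobson_eq_maximalIdeal _ bot_ne_top, Ideal.span_singleton_le_iff_mem]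
    exact hx)
  exact (Submodule.subsingleton_iff R).1 (subsingleton_of_bot_eq_top this.symm)

lemma extVanishes_reduction_right {n : ℕ} (h : ExtVanishes R M N n)
    (h' : ExtVanishes R M N (n + 1)) : ExtVanishes R M N' n :=
  extVanishes_co_right (f := LinearMap.lsmul R N x) hN hπ.exact hπ.surjective h h'

end Ext

section Dual

lemma isSMulRegular_dual (hR : IsSMulRegular R x) : IsSMulRegular (Module.Dual R A) x := by
  intro a b h
  ext i
  exact hR (LinearMap.congr_fun h i)

/-- The map from the dual of `A` to the dual of its reduction, reducing values modulo `x`. -/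
lemma exists_dual_reduction (hS : IsReduction x (Algebra.linearMap R S))
    {π : A →ₗ[R] A'} (hπ : IsReduction x π) :
    ∃ q : Module.Dual R A →ₗ[R] Module.Dual S A', ∀ f a, q f (π a) = algebraMap R S (f a) := by
  choose q hq using fun f : Module.Dual R A =>
    hπ.exists_desc (S := S) hS (Algebra.linearMap R S ∘ₗ f)
  refine ⟨{ toFun := q, map_add' := fun f g => ?_, map_smul' := fun r f => ?_ }, hq⟩
  · refine hπ.hom_ext fun a => ?_
    simp [hq]
  · refine hπ.hom_ext fun a => ?_
    simp [hq, Algebra.smul_def]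

/-- If `Ext^1(A, R) = 0` then the dual of `A/xA` over `R/xR` is the reduction of the dual of `A`. -/
lemma isReduction_dual (hS : IsReduction x (Algebra.linearMap R S)) (hR : IsSMulRegular R x)
    {π : A →ₗ[R] A'} (hπ : IsReduction x π) (hA : ExtVanishes R A R 1)
    {q : Module.Dual R A →ₗ[R] Module.Dual S A'}
    (hq : ∀ f a, q f (π a) = algebraMap R S (f a)) : IsReduction x q where
  surjective g := by
    obtain ⟨f, hf⟩ := exists_lift_of_extVanishes (f := LinearMap.lsmul R R x) hR hS.exact
      hS.surjective hA (g.restrictScalars R ∘ₗ π)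
    refine ⟨f, hπ.hom_ext fun a => ?_⟩
    rw [hq]
    exact LinearMap.congr_fun hf a
  map_smul_eq_zero f := by
    refine hπ.hom_ext fun a => ?_
    rw [hq]
    exact hS.map_smul_eq_zero (f a)
  exists_of_map_eq_zero f hf := by
    have h : ∀ a, ∃ b, f a = x • b := fun a => hS.exists_of_map_eq_zero _ (by
      rw [Algebra.linearMap_apply, ← hq, hf]; rfl)
    choose g hg using h
    refine ⟨{ toFun := g, map_add' := fun a b => hR ?_, map_smul' := fun r a => hR ?_ }, ?_⟩
    · change x • g (a + b) = x • (g a + g b)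
      rw [smul_add, ← hg, ← hg, ← hg, map_add]
    · change x • g (r • a) = x • (r • g a)
      rw [smul_comm, ← hg, ← hg, map_smul]
    · ext a; exact hg a

end Dual

/-- A map between finitely generated modules, the target being `x`-regular, is bijective if and
only if its reduction modulo `x` is, by Nakayama's lemma. -/
lemma bijective_iff_reduction [IsLocalRing R] [IsNoetherianRing R] [Module.Finite R A]
    [Module.Finite R B] (hx : x ∈ maximalIdeal R) (hB : IsSMulRegular B x)
    {πA : A →ₗ[R] A'} {πB : B →ₗ[R] B'} (hA' : IsReduction x πA) (hB' : IsReduction x πB)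
    (δ : A →ₗ[R] B) (δ' : A' →ₗ[S] B') (h : ∀ a, δ' (πA a) = πB (δ a)) :
    Function.Bijective δ ↔ Function.Bijective δ' := by
  have hjac : Ideal.span {x} ≤ Ideal.jacobson (⊥ : Ideal R) := by
    rw [IsLocalRing.jacobson_eq_maximalIdeal _ bot_ne_top, Ideal.span_singleton_le_iff_mem]
    exact hx
  constructor
  · rintro ⟨hinj, hsurj⟩
    constructor
    · rw [injective_iff_map_eq_zero]
      intro a' ha'
      obtain ⟨a, rfl⟩ := hA'.surjective a'
      rw [h] at ha'
      obtain ⟨b, hb⟩ := hB'.exists_of_map_eq_zero _ ha'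
      obtain ⟨a2, rfl⟩ := hsurj b
      rw [← map_smul] at hb
      rw [hinj hb, hA'.map_smul_eq_zero]
    · intro b'
      obtain ⟨b, rfl⟩ := hB'.surjective b'
      obtain ⟨a, rfl⟩ := hsurj b
      exact ⟨_, h a⟩
  · rintro ⟨hinj, hsurj⟩
    constructor
    · rw [← LinearMap.ker_eq_bot]
      refine Submodule.eq_bot_of_le_smul_of_le_jacobson_bot (Ideal.span {x}) _
        (IsNoetherian.noetherian _) (fun a ha => ?_) hjac
      have ha : δ a = 0 := ha
      have h1 : πA a = 0 := hinj (by rw [h, ha, map_zero, map_zero])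
      obtain ⟨a2, rfl⟩ := hA'.exists_of_map_eq_zero _ h1
      refine Submodule.smul_mem_smul (Ideal.mem_span_singleton_self x) (hB ?_)
      change x • δ a2 = x • (0 : B)
      rw [← map_smul, ha, smul_zero]
    · rw [← LinearMap.range_eq_top, ← top_le_iff]
      refine Submodule.le_of_le_smul_of_le_jacobson_bot Module.Finite.fg_top hjac (fun b _ => ?_)
      obtain ⟨a', ha'⟩ := hsurj (πB b)
      obtain ⟨a, rfl⟩ := hA'.surjective a'
      obtain ⟨b2, hb2⟩ := hB'.exists_of_map_eq_zero (b - δ a) (by rw [map_sub, ← h, ha', sub_self])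
      rw [← sub_add_cancel b (δ a), hb2, add_comm]
      exact Submodule.add_mem_sup ⟨a, rfl⟩
        (Submodule.smul_mem_smul (Ideal.mem_span_singleton_self x) trivial)

/-- Total reflexivity ascends to and descends from `R/xR`. -/
lemma isTotallyReflexive_iff_reduction [IsLocalRing R] [IsNoetherianRing R] [Module.Finite R A]
    (hS : IsReduction x (Algebra.linearMap R S)) (hx : x ∈ maximalIdeal R)
    (hR : IsSMulRegular R x) (hA : IsSMulRegular A x) {π : A →ₗ[R] A'} (hπ : IsReduction x π) :
    IsTotallyReflexive R A ↔ IsTotallyReflexive S A' := by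
  obtain ⟨q, hq⟩ := exists_dual_reduction hS hπ
  -- Reduction of the bidual, whenever the relevant `Ext^1` vanish.
  have main : ExtVanishes R A R 1 → ExtVanishes R (Module.Dual R A) R 1 →
      (Function.Bijective (Module.Dual.eval R A) ↔ Function.Bijective (Module.Dual.eval S A')) := by
    intro h1 h2
    have hqr := isReduction_dual hS hR hπ h1 hq
    obtain ⟨p, hp⟩ := exists_dual_reduction hS hqr
    have hpr := isReduction_dual hS hR hqr h2 hp
    refine bijective_iff_reduction (S := S) hx (isSMulRegular_dual hR) hπ hpr _ _ fun a => ?_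
    refine hqr.hom_ext fun f => ?_
    rw [hp, Module.Dual.eval_apply, Module.Dual.eval_apply, hq]
  have hD := isSMulRegular_dual (A := A) hR
  constructor
  · rintro ⟨h0, h1, h2⟩
    have hqr := isReduction_dual hS hR hπ (h1 1 one_pos) hq
    refine ⟨(main (h1 1 one_pos) (h2 1 one_pos)).1 h0, fun n hn => ?_, fun n hn => ?_⟩
    · rw [extVanishes_reduction_iff hS hR n hA hπ]
      exact extVanishes_reduction_right hS hR (h1 n hn) (h1 (n + 1) n.succ_pos)
    · rw [extVanishes_reduction_iff hS hR n hD hqr]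
      exact extVanishes_reduction_right hS hR (h2 n hn) (h2 (n + 1) n.succ_pos)
  · rintro ⟨h0, h1, h2⟩
    have h1' : ∀ n > 0, ExtVanishes R A R n := fun n hn =>
      extVanishes_of_reduction_right hS hR hx
        ((extVanishes_reduction_iff hS hR n hA hπ).1 (h1 n hn))
    have hqr := isReduction_dual hS hR hπ (h1' 1 one_pos) hq
    have h2' : ∀ n > 0, ExtVanishes R (Module.Dual R A) R n := fun n hn =>
      extVanishes_of_reduction_right hS hR hx
        ((extVanishes_reduction_iff hS hR n hD hqr).1 (h2 n hn))
    exact ⟨(main (h1' 1 one_pos) (h2' 1 one_pos)).2 h0, h1', h2'⟩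

end Reduction

/-! ### Totally reflexive modules -/

section TotallyReflexive
universe u
variable {R : Type u} [CommRing R] {A B C M F G : Type u} [AddCommGroup A] [Module R A]
  [AddCommGroup B] [Module R B] [AddCommGroup C] [Module R C] [AddCommGroup M] [Module R M]
  [AddCommGroup F] [Module R F] [AddCommGroup G] [Module R G]

lemma exists_comp_eq_of_exact {N : Type u} [AddCommGroup N] [Module R N] {f : A →ₗ[R] B}
    {g : B →ₗ[R] C} (hfg : Function.Exact f g) (hg : Function.Surjective g) (φ : B →ₗ[R] N)
    (hφ : φ ∘ₗ f = 0) : ∃ ψ : C →ₗ[R] N, ψ ∘ₗ g = φ := by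
  have hker : LinearMap.ker g ≤ LinearMap.ker φ := by
    intro b hb
    obtain ⟨a, rfl⟩ := (hfg b).1 hb
    exact LinearMap.congr_fun hφ a
  refine ⟨(LinearMap.ker g).liftQ φ hker ∘ₗ (g.quotKerEquivOfSurjective hg).symm.toLinearMap, ?_⟩
  ext b
  have : (g.quotKerEquivOfSurjective hg).symm (g b) = Submodule.Quotient.mk b := by
    rw [LinearEquiv.symm_apply_eq]; rfl
  change (LinearMap.ker g).liftQ φ hker ((g.quotKerEquivOfSurjective hg).symm (g b)) = _
  rw [this]
  exact Submodule.liftQ_apply _ _ _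

lemma dualMap_exact {f : A →ₗ[R] B} {g : B →ₗ[R] C} (hfg : Function.Exact f g)
    (hg : Function.Surjective g) : Function.Exact g.dualMap f.dualMap := by
  intro φ
  constructor
  · intro h
    exact exists_comp_eq_of_exact hfg hg φ h
  · rintro ⟨ψ, rfl⟩
    ext a
    change ψ (g (f a)) = 0
    rw [hfg.apply_apply_eq_zero, map_zero]

lemma dualMap_surjective_of_ext {f : A →ₗ[R] B} {g : B →ₗ[R] C} (hf : Function.Injective f)
    (hfg : Function.Exact f g) (hg : Function.Surjective g) (hC : ExtVanishes R C R 1) :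
    Function.Surjective f.dualMap :=
  fun φ => exists_extend_of_extVanishes hf hfg hg hC φ

/-- Naturality of the biduality map. -/
lemma dualMap_dualMap_eval (f : A →ₗ[R] B) (a : A) :
    f.dualMap.dualMap (Module.Dual.eval R A a) = Module.Dual.eval R B (f a) := rfl

/-- Finitely generated projective modules are totally reflexive. -/
lemma isTotallyReflexive_of_projective [Module.Finite R F] [Module.Projective R F] :
    IsTotallyReflexive R F := by
  refine ⟨Module.bijective_dual_eval R F, ?_, ?_⟩
  · rintro (_ | n) hn
    · omega
    · exact extVanishes_of_projective n
  · rintro (_ | n) hn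
    · omega
    · exact extVanishes_of_projective n

/-- The kernel of a surjection between totally reflexive modules is totally reflexive. -/
lemma IsTotallyReflexive.of_exact_left {f : A →ₗ[R] B} {g : B →ₗ[R] C}
    (hf : Function.Injective f) (hfg : Function.Exact f g) (hg : Function.Surjective g)
    (hB : IsTotallyReflexive R B) (hC : IsTotallyReflexive R C) : IsTotallyReflexive R A := by
  have hs := dualMap_surjective_of_ext hf hfg hg (hC.2.1 1 one_pos)
  have he := dualMap_exact hfg hg
  have hi := LinearMap.dualMap_injective_of_surjective hg
  refine ⟨⟨?_, ?_⟩, fun n hn => ?_, ?_⟩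
  · rw [injective_iff_map_eq_zero]
    intro a ha
    have h : Module.Dual.eval R B (f a) = 0 := by rw [← dualMap_dualMap_eval, ha, map_zero]
    have h2 : f a = 0 := hB.1.1 (by rw [h, map_zero])
    exact hf (by rw [h2, map_zero])
  · intro α
    obtain ⟨b, hb⟩ := hB.1.2 (f.dualMap.dualMap α)
    have h : Module.Dual.eval R C (g b) = 0 := by
      rw [← dualMap_dualMap_eval, hb]
      exact (dualMap_exact he hs).apply_apply_eq_zero α
    obtain ⟨a, rfl⟩ := (hfg b).1 (hC.1.1 (by rw [h, map_zero]))
    exact ⟨a, LinearMap.dualMap_injective_of_surjective hs (by rw [dualMap_dualMap_eval, hb])⟩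
  · exact extVanishes_contra_left hf hfg hg (hB.2.1 n hn) (hC.2.1 (n + 1) n.succ_pos)
  · rintro (_ | _ | n) hn
    · omega
    -- `Ext^1(A*, R)` is the cokernel of `B** → C**`, which is onto since `B → C` is.
    · refine extVanishes_one_of_extend hi he hs (hB.2.2 1 one_pos) fun φ => ?_
      obtain ⟨c, rfl⟩ := hC.1.2 φ
      obtain ⟨b, rfl⟩ := hg c
      exact ⟨Module.Dual.eval R B b, rfl⟩
    · exact extVanishes_contra_right hi he hs (hC.2.2 (n + 1) n.succ_pos)
        (hB.2.2 (n + 2) (by omega))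

/-- Total reflexivity is closed under extensions. -/
lemma IsTotallyReflexive.of_exact_mid {f : A →ₗ[R] B} {g : B →ₗ[R] C}
    (hf : Function.Injective f) (hfg : Function.Exact f g) (hg : Function.Surjective g)
    (hA : IsTotallyReflexive R A) (hC : IsTotallyReflexive R C) : IsTotallyReflexive R B := by
  have hs := dualMap_surjective_of_ext hf hfg hg (hC.2.1 1 one_pos)
  have he := dualMap_exact hfg hg
  have hi := LinearMap.dualMap_injective_of_surjective hg
  refine ⟨⟨?_, ?_⟩, fun n hn => ?_, fun n hn => ?_⟩
  · rw [injective_iff_map_eq_zero]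
    intro b hb
    have h : Module.Dual.eval R C (g b) = 0 := by rw [← dualMap_dualMap_eval, hb, map_zero]
    obtain ⟨a, rfl⟩ := (hfg b).1 (hC.1.1 (by rw [h, map_zero]))
    have h2 : Module.Dual.eval R A a = 0 :=
      LinearMap.dualMap_injective_of_surjective hs (by rw [dualMap_dualMap_eval, hb, map_zero])
    rw [hA.1.1 (h2.trans (map_zero _).symm), map_zero]
  · intro β
    obtain ⟨c, hc⟩ := hC.1.2 (g.dualMap.dualMap β)
    obtain ⟨b, rfl⟩ := hg c
    have h : g.dualMap.dualMap (β - Module.Dual.eval R B b) = 0 := by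
      rw [map_sub, dualMap_dualMap_eval, hc, sub_self]
    obtain ⟨α, hα⟩ := (dualMap_exact he hs _).1 h
    obtain ⟨a, rfl⟩ := hA.1.2 α
    refine ⟨f a + b, ?_⟩
    rw [map_add, ← dualMap_dualMap_eval, hα, sub_add_cancel]
  · exact extVanishes_contra_mid hf hfg hg (hA.2.1 n hn) (hC.2.1 n hn)
  · exact extVanishes_contra_mid hi he hs (hC.2.2 n hn) (hA.2.2 n hn)

lemma IsTotallyReflexive.congr (e : A ≃ₗ[R] B) (hA : IsTotallyReflexive R A) :
    IsTotallyReflexive R B :=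
  IsTotallyReflexive.of_exact_mid (C := PUnit.{u + 1}) (f := e.toLinearMap) (g := 0) e.injective
    (by intro b; simp) (fun _ => ⟨0, rfl⟩) hA isTotallyReflexive_of_projective

lemma IsTotallyReflexive.isSMulRegular {x : R} (hR : IsSMulRegular R x)
    (hA : IsTotallyReflexive R A) : IsSMulRegular A x :=
  isSMulRegular_of_injective hA.1.1 (isSMulRegular_dual hR)

end TotallyReflexive

/-! ### G-dimension -/

section GDimension
universe u
variable {R : Type u} [CommRing R] {A B C M F G : Type u} [AddCommGroup A] [Module R A]
  [AddCommGroup B] [Module R B] [AddCommGroup C] [Module R C] [AddCommGroup M] [Module R M]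
  [AddCommGroup F] [Module R F] [AddCommGroup G] [Module R G]

lemma exists_equiv_ker {i : A →ₗ[R] B} {f : B →ₗ[R] C} (hi : Function.Injective i)
    (hif : Function.Exact i f) : Nonempty (A ≃ₗ[R] LinearMap.ker f) :=
  ⟨(LinearEquiv.ofInjective i hi).trans
    (LinearEquiv.ofEq _ _ (LinearMap.exact_iff.1 hif).symm)⟩

lemma gdimLE_congr {n : ℕ} (e : A ≃ₗ[R] B) (h : GdimLE R n (ModuleCat.of R A)) :
    GdimLE R n (ModuleCat.of R B) := by
  cases n with
  | zero => exact IsTotallyReflexive.congr e h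
  | succ n =>
    obtain ⟨G, hG, hG', f, hf, hk⟩ := h
    refine ⟨G, hG, hG', e.toLinearMap ∘ₗ f, e.surjective.comp hf, ?_⟩
    rw [LinearMap.ker_comp_of_ker_eq_bot f e.ker]
    exact hk

lemma gdimLE_succ_of_exact {n : ℕ} {i : A →ₗ[R] G} {f : G →ₗ[R] M} (hi : Function.Injective i)
    (hif : Function.Exact i f) (hf : Function.Surjective f) [Module.Finite R G]
    (hG : IsTotallyReflexive R G) (hA : GdimLE R n (ModuleCat.of R A)) :
    GdimLE R (n + 1) (ModuleCat.of R M) := by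
  obtain ⟨e⟩ := exists_equiv_ker hi hif
  exact ⟨ModuleCat.of R G, inferInstance, hG, f, hf, gdimLE_congr e hA⟩

lemma gdimLE_succ_elim {n : ℕ} (h : GdimLE R (n + 1) (ModuleCat.of R M)) :
    ∃ (G : Type u) (_ : AddCommGroup G) (_ : Module R G) (_ : Module.Finite R G)
      (f : G →ₗ[R] M), IsTotallyReflexive R G ∧ Function.Surjective f ∧
        GdimLE R n (ModuleCat.of R (LinearMap.ker f)) := by
  obtain ⟨G, hG, hG', f, hf, hk⟩ := h
  exact ⟨G, inferInstance, inferInstance, hG, f, hG', hf, hk⟩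

/-- Adding a finitely generated free summand does not increase the G-dimension. -/
lemma gdimLE_prod_free [Module.Finite R F] [Module.Free R F] {n : ℕ} {K : Type u}
    [AddCommGroup K] [Module R K] (h : GdimLE R n (ModuleCat.of R K)) :
    GdimLE R n (ModuleCat.of R (F × K)) := by
  have key : ∀ {G : Type u} [AddCommGroup G] [Module R G], IsTotallyReflexive R G →
      IsTotallyReflexive R (F × G) := fun hG =>
    IsTotallyReflexive.of_exact_mid (f := LinearMap.inr R F _) (g := LinearMap.fst R F _)
      LinearMap.inr_injective Function.Exact.inr_fst LinearMap.fst_surjective hG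
      isTotallyReflexive_of_projective
  cases n with
  | zero => exact key h
  | succ n =>
    obtain ⟨G, _, _, _, f, hG, hf, hk⟩ := gdimLE_succ_elim h
    refine gdimLE_succ_of_exact (G := F × G)
      (i := LinearMap.inr R F G ∘ₗ (LinearMap.ker f).subtype)
      (f := LinearMap.prodMap LinearMap.id f)
      (LinearMap.inr_injective.comp Subtype.val_injective) ?_
      (Function.surjective_id.prodMap hf) (key hG) hk
    rintro ⟨y, z⟩
    constructor
    · intro h
      obtain ⟨h1, h2⟩ := Prod.ext_iff.1 h
      exact ⟨⟨z, h2⟩, Prod.ext h1.symm rfl⟩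
    · rintro ⟨⟨w, hw⟩, h⟩
      rw [← h]
      exact Prod.ext rfl hw

/-- The kernel of a surjection from a module of G-dimension at most `n` onto a totally reflexive
module has G-dimension at most `n`. -/
lemma gdimLE_ker [IsNoetherianRing R] {n : ℕ} {p : B →ₗ[R] G} (hp : Function.Surjective p)
    (hB : GdimLE R n (ModuleCat.of R B)) (hG : IsTotallyReflexive R G) :
    GdimLE R n (ModuleCat.of R (LinearMap.ker p)) := by
  have hker : ∀ {B : Type u} [AddCommGroup B] [Module R B] (p : B →ₗ[R] G),
      Function.Surjective p → IsTotallyReflexive R B → IsTotallyReflexive R (LinearMap.ker p) :=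
    fun p hp hB => IsTotallyReflexive.of_exact_left (f := (LinearMap.ker p).subtype) (g := p)
      Subtype.val_injective (LinearMap.exact_subtype_ker_map p) hp hB hG
  cases n with
  | zero => exact hker p hp hB
  | succ n =>
    obtain ⟨G', _, _, _, f, hG', hf, hk⟩ := gdimLE_succ_elim hB
    refine gdimLE_succ_of_exact (A := LinearMap.ker f) (G := LinearMap.ker (p ∘ₗ f))
      (i := Submodule.inclusion (LinearMap.ker_le_ker_comp f p))
      (f := f.restrict (p := LinearMap.ker (p ∘ₗ f)) (q := LinearMap.ker p) fun y hy => hy)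
      (Submodule.inclusion_injective _) ?_ ?_ (hker _ (hp.comp hf) hG') hk
    · rintro ⟨y, hy⟩
      constructor
      · intro h
        exact ⟨⟨y, congrArg Subtype.val h⟩, rfl⟩
      · rintro ⟨⟨w, hw⟩, h⟩
        rw [← h]
        exact Subtype.ext hw
    · rintro ⟨b, hb⟩
      obtain ⟨y, rfl⟩ := hf b
      exact ⟨⟨y, hb⟩, rfl⟩

/-- For a surjection `f` from a finitely generated free module onto `M`,
`G-dim M ≤ n + 1` if and only if `G-dim (ker f) ≤ n`. -/
lemma gdimLE_succ_iff_of_free [IsNoetherianRing R] [Module.Finite R F] [Module.Free R F] {n : ℕ}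
    {f : F →ₗ[R] M} (hf : Function.Surjective f) :
    GdimLE R (n + 1) (ModuleCat.of R M) ↔ GdimLE R n (ModuleCat.of R (LinearMap.ker f)) := by
  constructor
  · intro h
    obtain ⟨G, _, _, _, g, hG, hg, hk⟩ := gdimLE_succ_elim h
    obtain ⟨s, hs⟩ := Module.projective_lifting_property g f hg
    have hs : ∀ y, g (s y) = f y := LinearMap.congr_fun hs
    -- `F × ker g` is the pullback of `f` and `g`, mapping onto `G` with kernel `ker f`.
    let p : F × LinearMap.ker g →ₗ[R] G := s.coprod (LinearMap.ker g).subtype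
    have hpa : ∀ y z, p (y, z) = s y + z := fun y z => rfl
    have hp : Function.Surjective p := by
      intro w
      obtain ⟨y, hy⟩ := hf (g w)
      exact ⟨(y, ⟨w - s y, by rw [LinearMap.mem_ker, map_sub, hs, hy, sub_self]⟩), by
        rw [hpa]; exact add_sub_cancel _ _⟩
    have h1 := gdimLE_ker hp (gdimLE_prod_free (F := F) hk) hG
    let q : LinearMap.ker f →ₗ[R] LinearMap.ker g :=
      LinearMap.codRestrict _ (-(s ∘ₗ (LinearMap.ker f).subtype)) fun y => by
        change g (-(s y)) = 0
        rw [map_neg, hs, y.2, neg_zero]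
    have hq : ∀ y, (q y : G) = -(s y) := fun y => rfl
    obtain ⟨e⟩ := exists_equiv_ker (i := (LinearMap.ker f).subtype.prod q) (f := p)
      (fun y z h => Subtype.ext (Prod.ext_iff.1 h).1) (by
        rintro ⟨y, z⟩
        rw [hpa]
        constructor
        · intro h
          have h3 : (z : G) = -(s y) := eq_neg_of_add_eq_zero_right h
          have h4 : f y = 0 := by
            have h5 : g z = 0 := z.2
            rwa [h3, map_neg, hs, neg_eq_zero] at h5
          exact ⟨⟨y, h4⟩, Prod.ext rfl (Subtype.ext h3.symm)⟩
        · rintro ⟨w, hw⟩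
          obtain ⟨h3, h4⟩ := Prod.ext_iff.1 hw
          have h3 : (w : F) = y := h3
          have h4 : q w = z := h4
          rw [← h4, hq, h3, add_neg_cancel])
    exact gdimLE_congr e.symm h1
  · intro h
    exact gdimLE_succ_of_exact (i := (LinearMap.ker f).subtype) Subtype.val_injective
      (LinearMap.exact_subtype_ker_map f) hf isTotallyReflexive_of_projective h

/-- `Ext^i(M, R) = 0` for `i` greater than the G-dimension of `M`. -/
lemma extVanishes_self_of_gdimLE {n : ℕ} (h : GdimLE R n (ModuleCat.of R M)) {i : ℕ}
    (hi : n < i) : ExtVanishes R M R i := by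
  induction n generalizing M i with
  | zero => exact h.2.1 i hi
  | succ n ih =>
    obtain ⟨G, _, _, _, f, hG, hf, hk⟩ := gdimLE_succ_elim h
    obtain ⟨j, rfl⟩ : ∃ j, i = j + 1 := ⟨i - 1, by omega⟩
    exact extVanishes_contra_right (f := (LinearMap.ker f).subtype) Subtype.val_injective
      (LinearMap.exact_subtype_ker_map f) hf (ih hk (by omega)) (hG.2.1 (j + 1) j.succ_pos)

variable (R M) in
/-- A finitely generated module is a quotient of a finitely generated free module `F`; moreover
`Ext^n(L, F)` vanishes whenever `Ext^n(L, R)` does. -/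
lemma exists_finite_free_cover [Module.Finite R M] : ∃ (F : Type u) (_ : AddCommGroup F)
    (_ : Module R F) (_ : Module.Free R F) (_ : Module.Finite R F) (f : F →ₗ[R] M),
    Function.Surjective f ∧ ∀ (L : Type u) [AddCommGroup L] [Module R L] (n : ℕ),
      ExtVanishes R L R n → ExtVanishes R L F n := by
  obtain ⟨m, f, hf⟩ := Module.Finite.exists_fin' R M
  exact ⟨Fin m → R, inferInstance, inferInstance, inferInstance, inferInstance, f, hf,
    fun L _ _ n h => extVanishes_pi h m⟩

/-- G-dimension is unchanged by reduction modulo an element regular on `R` and `M`. -/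
lemma gdimLE_reduction_iff [IsLocalRing R] [IsNoetherianRing R] {S : Type u} [CommRing S]
    [Algebra R S] {x : R} (hS : IsReduction x (Algebra.linearMap R S)) (hx : x ∈ maximalIdeal R)
    (hR : IsSMulRegular R x) (n : ℕ) {M M' : Type u} [AddCommGroup M] [Module R M]
    [AddCommGroup M'] [Module R M'] [Module S M'] [IsScalarTower R S M'] [Module.Finite R M]
    (hM : IsSMulRegular M x) {π : M →ₗ[R] M'} (hπ : IsReduction x π) :
    GdimLE R n (ModuleCat.of R M) ↔ GdimLE S n (ModuleCat.of S M') := by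
  have : IsNoetherianRing S := isNoetherianRing_of_surjective R S (algebraMap R S) hS.surjective
  induction n generalizing M M' with
  | zero => exact isTotallyReflexive_iff_reduction hS hx hR hM hπ
  | succ n ih =>
    obtain ⟨F, _, _, _, _, f, hf, -⟩ := exists_finite_free_cover R M
    obtain ⟨F', _, _, _, _, πF, hF, hFfree, hFfin⟩ := exists_reduction F hS
    have := hFfree inferInstance
    have := hFfin inferInstance
    obtain ⟨f', hf'⟩ := hF.exists_desc hS (π ∘ₗ f)
    have hi : Function.Injective (LinearMap.ker f).subtype := Subtype.val_injective
    obtain ⟨hfs, πK, hπK, -⟩ := IsReduction.ker hi (LinearMap.exact_subtype_ker_map f) hf hM hF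
      hπ f' hf'
    rw [gdimLE_succ_iff_of_free hf, gdimLE_succ_iff_of_free hfs]
    exact ih (isSMulRegular_of_injective hi (isSMulRegular_of_free hR)) hπK

end GDimension

/-! ### Invariance of AB-dimension -/

section Final
universe u
variable {R : Type u} [CommRing R] {M N : Type u} [AddCommGroup M] [Module R M]
  [AddCommGroup N] [Module R N]

lemma extP_le_iff {b : WithBot ℕ∞} :
    extP R M N ≤ b ↔ ∀ n : ℕ, ¬ ExtVanishes R M N n → ((n : ℕ∞) : WithBot ℕ∞) ≤ b := by
  refine ⟨fun h n hn => ?_, fun h => sSup_le ?_⟩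
  · have h' : ((n : ℕ∞) : WithBot ℕ∞) ≤ extP R M N := le_sSup ⟨n, hn, rfl⟩
    exact h'.trans h
  · rintro _ ⟨n, hn, rfl⟩
    exact h n hn

lemma extPsup_le_iff {b : WithBot ℕ∞} :
    extPsup R M ≤ b ↔ ∀ (N : Type u) [AddCommGroup N] [Module R N], Module.Finite R N →
      MemPerp R M N → extP R M N ≤ b := by
  refine ⟨fun h N _ _ hN hp => ?_, fun h => sSup_le ?_⟩
  · have h' : extP R M N ≤ extPsup R M := le_sSup ⟨N, inferInstance, inferInstance, hN, hp, rfl⟩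
    exact h'.trans h
  · rintro _ ⟨N, _, _, hN, hp, rfl⟩
    exact h N hN hp

lemma extVanishes_of_extPsup_lt (hN : Module.Finite R N) (hp : MemPerp R M N) {n : ℕ}
    (h : extPsup R M < ((n : ℕ∞) : WithBot ℕ∞)) : ExtVanishes R M N n := by
  by_contra hn
  exact absurd (extP_le_iff.1 (extPsup_le_iff.1 le_rfl N hN hp) n hn) (not_le.2 h)

lemma exists_gdimLE_of_gdim_ne_top (h : gdim R M ≠ ⊤) :
    ∃ g : ℕ, GdimLE R g (ModuleCat.of R M) ∧ gdim R M = g := by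
  have hne : {x : ℕ∞ | ∃ n : ℕ, GdimLE R n (ModuleCat.of R M) ∧ x = n}.Nonempty := by
    by_contra hne
    rw [Set.not_nonempty_iff_eq_empty] at hne
    exact h (by rw [gdim, hne, sInf_empty])
  exact csInf_mem hne

/-- `AB-dim` is unchanged by reduction modulo an element regular on `R` and `M`. -/
lemma abdim_reduction [IsLocalRing R] [IsNoetherianRing R] {S : Type u} [CommRing S]
    [Algebra R S] {x : R} (hS : IsReduction x (Algebra.linearMap R S)) (hx : x ∈ maximalIdeal R)
    (hR : IsSMulRegular R x) {M' : Type u}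
    [AddCommGroup M'] [Module R M'] [Module S M'] [IsScalarTower R S M'] [Module.Finite R M]
    (hM : IsSMulRegular M x) {π : M →ₗ[R] M'} (hπ : IsReduction x π) :
    abdim S M' = abdim R M := by
  have hg : gdim S M' = gdim R M := by
    unfold gdim
    simp only [gdimLE_reduction_iff hS hx hR _ hM hπ]
  have : Module.Finite R S := Module.Finite.of_surjective (Algebra.linearMap R S) hS.surjective
  -- Every test module over `S` is a test module over `R`, by restriction of scalars.
  have hle : extPsup S M' ≤ extPsup R M := by
    rw [extPsup_le_iff]
    intro N _ _ hN hp
    let : Module R N := Module.compHom N (algebraMap R S)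
    have : IsScalarTower R S N := ⟨fun r s n => by
      rw [Algebra.smul_def, mul_smul]; rfl⟩
    have key := fun n => extVanishes_reduction_iff (N := N) hS hR n hM hπ
    have hp' : MemPerp R M N := by
      obtain ⟨d, hd⟩ := hp
      exact ⟨d, fun n hn => (key n).1 (hd n hn)⟩
    rw [extP_le_iff]
    intro n hn
    rw [key] at hn
    exact extP_le_iff.1 (extPsup_le_iff.1 le_rfl N (Module.Finite.trans S N) hp') n hn
  unfold abdim
  rw [hg]
  refine le_antisymm (max_le_max le_rfl hle) (max_le (le_max_left _ _) ?_)
  by_cases htop : gdim R M = ⊤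
  · rw [htop]
    exact le_top.trans (le_max_left _ _)
  obtain ⟨g, hgM, hgeq⟩ := exists_gdimLE_of_gdim_ne_top htop
  rw [extPsup_le_iff]
  intro N _ _ hN hp
  rw [extP_le_iff]
  intro n hn
  by_contra hlt
  rw [not_le, max_lt_iff, hgeq] at hlt
  have hgn : g < n := by exact_mod_cast hlt.1
  refine hn ?_
  -- `N` is replaced by its first syzygy, on which `x` is regular, and then by the reduction of
  -- that syzygy, which is a test module over `S`.
  obtain ⟨F, _, _, _, _, f, hf, hF⟩ := exists_finite_free_cover R N
  have hFM : ∀ m, g < m → ExtVanishes R M F m := fun m hm =>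
    hF M m (extVanishes_self_of_gdimLE hgM hm)
  have hi : Function.Injective (LinearMap.ker f).subtype := Subtype.val_injective
  have hif : Function.Exact (LinearMap.ker f).subtype f := LinearMap.exact_subtype_ker_map f
  have hK : IsSMulRegular (LinearMap.ker f) x :=
    isSMulRegular_of_injective hi (isSMulRegular_of_free hR)
  obtain ⟨K', _, _, _, _, πK, hπK, -, hfin⟩ := exists_reduction (LinearMap.ker f) hS
  have key := fun n => extVanishes_reduction_iff (N := K') hS hR n hM hπ
  have hperp : MemPerp S M' K' := by
    obtain ⟨d, hd⟩ := hp
    have hKM : ∀ m, max d g ≤ m → ExtVanishes R M (LinearMap.ker f) (m + 1) := fun m hm =>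
      extVanishes_co_left hi hif hf (hd m (by omega)) (hFM (m + 1) (by omega))
    refine ⟨max d g + 1, fun m hm => ?_⟩
    obtain ⟨j, rfl⟩ : ∃ j, m = j + 1 := ⟨m - 1, by omega⟩
    rw [key]
    exact extVanishes_reduction_right hπK hK (hKM j (by omega)) (hKM (j + 1) (by omega))
  have hK' : ExtVanishes S M' K' (n + 1) :=
    extVanishes_of_extPsup_lt (hfin inferInstance) hperp
      (hlt.2.trans (by exact_mod_cast Nat.lt_succ_self n))
  exact extVanishes_co_right hi hif hf (hFM n hgn)
    (extVanishes_of_reduction_right hπK hK hx ((key (n + 1)).1 hK'))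

/-- `M → M / xM` is a reduction modulo `x`. -/
lemma isReduction_mkQ (x : R) :
    IsReduction x (Submodule.mkQ (Ideal.span {x} • (⊤ : Submodule R M))) where
  surjective := Submodule.mkQ_surjective _
  map_smul_eq_zero a := by
    rw [Submodule.mkQ_apply, Submodule.Quotient.mk_eq_zero]
    exact Submodule.smul_mem_smul (Ideal.mem_span_singleton_self x) trivial
  exists_of_map_eq_zero a ha := by
    rw [Submodule.mkQ_apply, Submodule.Quotient.mk_eq_zero,
      Submodule.ideal_span_singleton_smul] at ha
    obtain ⟨b, -, hb⟩ := ha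
    exact ⟨b, hb.symm⟩

/-- `R → R / xR` is a reduction modulo `x`. -/
lemma isReduction_quotient (x : R) :
    IsReduction x (Algebra.linearMap R (R ⧸ Ideal.span {x})) where
  surjective := Ideal.Quotient.mk_surjective
  map_smul_eq_zero a := by
    rw [Algebra.linearMap_apply, Ideal.Quotient.algebraMap_eq, Ideal.Quotient.eq_zero_iff_mem]
    exact Ideal.mul_mem_right _ _ (Ideal.mem_span_singleton_self x)
  exists_of_map_eq_zero a ha := by
    rw [Algebra.linearMap_apply, Ideal.Quotient.algebraMap_eq, Ideal.Quotient.eq_zero_iff_mem,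
      Ideal.mem_span_singleton] at ha
    exact ha

end Final

/-- Proposition 2.6(3): `AB-dim_{R/xR} (M/xM) = AB-dim_R M` for any element `x ∈ 𝔪`
that is both `R`-regular and `M`-regular. -/
theorem statement8 (R : Type u) [CommRing R] [IsLocalRing R] [IsNoetherianRing R]
    (M : Type u) [AddCommGroup M] [Module R M] [Module.Finite R M] [Nontrivial M]
    (x : R) (hx : x ∈ maximalIdeal R) (hregR : IsSMulRegular R x) (hregM : IsSMulRegular M x) :
    abdim (R ⧸ (Ideal.span {x} : Ideal R))
      (M ⧸ ((Ideal.span {x} : Ideal R) • (⊤ : Submodule R M))) = abdim R M := by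
  exact abdim_reduction (isReduction_quotient x) hx hregR hregM (isReduction_mkQ x)
end

section
/- Let (R, 𝔪, k) be a commutative noetherian local ring and M a finitely generated R-module with AB-dim_R M < ∞. If Ext^n_R(M,M) = 0 for all sufficiently large n, then pd_R M < ∞. -/
/-!
Since `G-dim M` is finite, dimension shifting along a totally reflexive resolution gives
`Ext^i(M, R) = 0` for large `i`, that is `R ∈ M^⊥`; and `M ∈ M^⊥` by hypothesis. By the long
exact sequence in the second variable, `M^⊥` then contains every syzygy of `M`. Let `p` be
a natural number with `P_R(M) < p`, let `K` be a `p`-th syzygy of `M`, and let `L` be the kernel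
of a finite free cover `F → K`. As `L ∈ M^⊥`, the bound on `P_R(M)` gives
`Ext^1(K, L) ≅ Ext^{p+1}(M, L) = 0`, so `0 → L → F → K → 0` splits, `K` is projective and
`pd M ≤ p`. The syzygies need not be minimal.

The argument is carried out with `CategoryTheory.Abelian.Ext`, which has long exact sequences;
`extVanishes_succ_iff` compares it in positive degrees with the left derived functor `Ext` that
defines `ExtVanishes`.
-/

open CategoryTheory IsLocalRing

/-- The left derived `Ext` functor of `ExtVanishes` and the derived-category `Ext` vanish in the
same positive degrees: both are computed by a projective resolution of `M`. -/
lemma extVanishes_succ_iff (R : Type u) [CommRing R] (M N : Type u) [AddCommGroup M] [Module R M]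
    [AddCommGroup N] [Module R N] (n : ℕ) :
    ExtVanishes R M N (n + 1) ↔
      Subsingleton (Abelian.Ext (ModuleCat.of R M) (ModuleCat.of R N) (n + 1)) := by
  let P := projectiveResolution (ModuleCat.of R M)
  have h1 : ExtVanishes R M N (n + 1) ↔
      (P.complex.linearYonedaObj R (ModuleCat.of R N)).ExactAt (n + 1) := by
    rw [HomologicalComplex.exactAt_iff_isZero_homology,
      ← (P.isoExt (R := R) (n + 1) (ModuleCat.of R N)).isZero_iff,
      ModuleCat.isZero_iff_subsingleton]
    rfl
  rw [h1, HomologicalComplex.exactAt_iff' _ n (n + 1) (n + 2) (by simp) (by simp),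
    ShortComplex.moduleCat_exact_iff]
  constructor
  · intro h
    refine subsingleton_of_forall_eq 0 fun α => ?_
    obtain ⟨f, hf, rfl⟩ := P.extMk_surjective α (n + 2) rfl
    rw [P.extMk_eq_zero_iff f (n + 2) rfl hf n rfl]
    obtain ⟨g, hg⟩ := h f hf
    exact ⟨g, hg⟩
  · intro h f hf
    obtain ⟨g, hg⟩ := (P.extMk_eq_zero_iff f (n + 2) rfl hf n rfl).1 (Subsingleton.elim _ _)
    exact ⟨g, hg⟩

lemma memPerp_iff (R : Type u) [CommRing R] (M N : Type u) [AddCommGroup M] [Module R M]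
    [AddCommGroup N] [Module R N] :
    MemPerp R M N ↔ ∃ d : ℕ, ∀ n ≥ d,
      Subsingleton (Abelian.Ext (ModuleCat.of R M) (ModuleCat.of R N) n) := by
  constructor
  all_goals
    rintro ⟨d, hd⟩
    refine ⟨d + 1, fun n hn => ?_⟩
    obtain ⟨m, rfl⟩ : ∃ m, n = m + 1 := ⟨n - 1, by omega⟩
  · exact (extVanishes_succ_iff R M N m).1 (hd _ (by omega))
  · exact (extVanishes_succ_iff R M N m).2 (hd _ (by omega))

lemma GdimLE.subsingleton_ext (R : Type u) [CommRing R] (n : ℕ) (M : ModuleCat.{u} R)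
    (h : GdimLE R n M) (i : ℕ) (hi : n < i) :
    Subsingleton (Abelian.Ext M (ModuleCat.of R R) i) := by
  induction n generalizing M i with
  | zero =>
    obtain ⟨m, rfl⟩ : ∃ m, i = m + 1 := ⟨i - 1, by omega⟩
    exact (extVanishes_succ_iff R M R m).1 (h.2.1 _ (by omega))
  | succ n ih =>
    obtain ⟨G, -, hG, f, hf, hK⟩ := h
    obtain ⟨m, rfl⟩ : ∃ m, i = m + 1 := ⟨i - 1, by omega⟩
    have hS := LinearMap.shortExact_shortComplexKer hf
    have := ih _ hK m (by omega)
    have hG' : Subsingleton (Abelian.Ext G (ModuleCat.of R R) (m + 1)) :=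
      (extVanishes_succ_iff R G R m).1 (hG.2.1 _ (by omega))
    refine subsingleton_of_forall_eq 0 fun x => ?_
    obtain ⟨y, rfl⟩ := Abelian.Ext.contravariant_sequence_exact₃ hS _ x
      (hG'.elim _ _) (add_comm 1 m)
    rw [this.elim y 0, Abelian.Ext.comp_zero]

lemma memPerp_fin (R : Type u) [CommRing R] (M : Type u) [AddCommGroup M] [Module R M]
    (h : MemPerp R M R) (s : ℕ) : MemPerp R M (Fin s → R) := by
  rw [memPerp_iff] at h ⊢
  obtain ⟨d, hd⟩ := h
  refine ⟨d, fun n hn => ?_⟩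
  have := hd n hn
  refine subsingleton_of_forall_eq 0 fun x => ?_
  -- the identity of `R^s` is the sum of the composites `R^s → R → R^s`
  have hid : 𝟙 (ModuleCat.of R (Fin s → R)) = ∑ i : Fin s,
      (ModuleCat.ofHom (LinearMap.proj (R := R) (φ := fun _ : Fin s => R) i) ≫
        ModuleCat.ofHom (LinearMap.single R (fun _ : Fin s => R) i)) := by
    ext v j
    simp [ModuleCat.hom_sum, Pi.single_apply]
  rw [← Abelian.Ext.comp_mk₀_id x, hid, Abelian.Ext.mk₀_sum, Abelian.Ext.comp_sum]
  refine Finset.sum_eq_zero fun i _ => ?_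
  rw [← Abelian.Ext.mk₀_comp_mk₀, ← Abelian.Ext.comp_assoc_of_third_deg_zero,
    this.elim (x.comp _ _) 0, Abelian.Ext.zero_comp]

/-- The kernel of a finite free cover of a member of `M^⊥` is again in `M^⊥`, provided that
`R ∈ M^⊥`. -/
lemma memPerp_ker (R : Type u) [CommRing R] (M : Type u) [AddCommGroup M] [Module R M]
    (hR : MemPerp R M R) (N : Type u) [AddCommGroup N] [Module R N] (hN : MemPerp R M N)
    (s : ℕ) (f : (Fin s → R) →ₗ[R] N) (hf : Function.Surjective f) :
    MemPerp R M (LinearMap.ker f) := by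
  have hF := memPerp_fin R M hR s
  rw [memPerp_iff] at hN hF ⊢
  obtain ⟨a, ha⟩ := hN
  obtain ⟨b, hb⟩ := hF
  have hS := LinearMap.shortExact_shortComplexKer hf
  refine ⟨max a b + 1, fun n hn => ?_⟩
  obtain ⟨m, rfl⟩ : ∃ m, n = m + 1 := ⟨n - 1, by omega⟩
  have h1 := ha m (by omega)
  have h2 := hb (m + 1) (by omega)
  refine subsingleton_of_forall_eq 0 fun x => ?_
  obtain ⟨y, rfl⟩ := Abelian.Ext.covariant_sequence_exact₁ _ hS x (h2.elim _ _) rfl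
  rw [h1.elim y 0, Abelian.Ext.zero_comp]

/-- Every finite `N ∈ M^⊥` has a finite `k`-th syzygy `K ∈ M^⊥`, which satisfies dimension
shifting, and whose projectivity bounds the projective dimension of `N` by `k`. -/
lemma exists_syzygy (R : Type u) [CommRing R] [IsNoetherianRing R] (M : Type u) [AddCommGroup M]
    [Module R M] (hR : MemPerp R M R) (k : ℕ) (N : Type u) [AddCommGroup N] [Module R N]
    [Module.Finite R N] (hN : MemPerp R M N) :
    ∃ K : ModuleCat.{u} R, Module.Finite R K ∧ MemPerp R M K ∧
      (∀ (X : ModuleCat.{u} R) (j : ℕ),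
        Subsingleton (Abelian.Ext (ModuleCat.of R N) X (j + 1 + k)) →
          Subsingleton (Abelian.Ext K X (j + 1))) ∧
      (Module.Projective R K → ProjDimLE R k (ModuleCat.of R N)) := by
  induction k generalizing N with
  | zero => exact ⟨ModuleCat.of R N, ‹_›, hN, fun X j h => h, fun h => h⟩
  | succ k ih =>
    obtain ⟨s, f, hf⟩ := Module.Finite.exists_fin' R N
    obtain ⟨K, hK, hKM, hshift, hproj⟩ := ih (LinearMap.ker f) (memPerp_ker R M hR N hN s f hf)
    have hS := LinearMap.shortExact_shortComplexKer hf
    refine ⟨K, hK, hKM, fun X j h => hshift X j ?_, fun h =>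
      ⟨ModuleCat.of R (Fin s → R), inferInstanceAs (Module.Finite R (Fin s → R)),
        inferInstanceAs (Module.Projective R (Fin s → R)), f, hf, hproj h⟩⟩
    have hP : Projective (ModuleCat.of R (Fin s → R)) :=
      (IsProjective.iff_projective _).1 inferInstance
    have hF : Subsingleton (Abelian.Ext (ModuleCat.of R (Fin s → R)) X (j + k + 1)) :=
      subsingleton_of_forall_eq 0 Abelian.Ext.eq_zero_of_projective
    refine subsingleton_of_forall_eq 0 fun x => ?_
    have hj : j + 1 + k = j + k + 1 := by omega
    obtain ⟨y, rfl⟩ := Abelian.Ext.contravariant_sequence_exact₁ hS X x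
      (n₁ := j + 1 + (k + 1)) (by omega) (h.elim _ _)
    rw [← hj] at hF
    rw [hF.elim y 0, Abelian.Ext.comp_zero]

/-- If `Ext^1(K, ker f) = 0` for a surjection `f` from `R^s` onto `K`, then `f` splits
and `K` is projective. -/
lemma projective_of_ext_ker (R : Type u) [CommRing R] (K : Type u) [AddCommGroup K] [Module R K]
    (s : ℕ) (f : (Fin s → R) →ₗ[R] K) (hf : Function.Surjective f)
    (h : Subsingleton (Abelian.Ext (ModuleCat.of R K) (ModuleCat.of R (LinearMap.ker f)) 1)) :
    Module.Projective R K := by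
  have hS := LinearMap.shortExact_shortComplexKer hf
  obtain ⟨x, hx⟩ := Abelian.Ext.covariant_sequence_exact₃ (ModuleCat.of R K) hS
    (Abelian.Ext.mk₀ (𝟙 (ModuleCat.of R K))) (zero_add 1) (h.elim _ _)
  obtain ⟨g, rfl⟩ := (Abelian.Ext.mk₀_bijective _ _).2 x
  rw [Abelian.Ext.mk₀_comp_mk₀] at hx
  have hg := (Abelian.Ext.mk₀_bijective _ _).1 hx
  refine Module.Projective.of_split (M := Fin s → R) g.hom f ?_
  exact congrArg ModuleCat.Hom.hom hg

/-- Corollary 2.8: if `M` is a finitely generated module with `AB-dim_R M < ∞` and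
`Ext^n_R(M,M) = 0` for all `n ≫ 0`, then `pd_R M < ∞`. -/
theorem statement10 (R : Type u) [CommRing R] [IsLocalRing R] [IsNoetherianRing R]
    (M : Type u) [AddCommGroup M] [Module R M] [Module.Finite R M]
    (h : abdim R M < ⊤) (hext : MemPerp R M M) :
    projdim R M < ⊤ := by
  rw [abdim, max_lt_iff] at h
  obtain ⟨hG, hP⟩ := h
  have hR : MemPerp R M R := by
    have hG' : gdim R M < ⊤ := WithBot.coe_lt_coe.1 hG
    obtain ⟨_, ⟨n, hn, -⟩, -⟩ := sInf_lt_iff.1 hG'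
    exact (memPerp_iff R M R).2 ⟨n + 1, fun i hi => GdimLE.subsingleton_ext R n _ hn i hi⟩
  obtain ⟨p, hp⟩ : ∃ p : ℕ, extPsup R M < ((p : ℕ∞) : WithBot ℕ∞) := by
    induction hq : extPsup R M using WithBot.recBotCoe with
    | bot => exact ⟨0, WithBot.bot_lt_coe _⟩
    | coe q =>
      rw [hq] at hP
      obtain ⟨q, rfl⟩ := ENat.ne_top_iff_exists.1 (WithBot.coe_lt_coe.1 hP).ne
      exact ⟨q + 1, WithBot.coe_lt_coe.2 (by exact_mod_cast Nat.lt_succ_self q)⟩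
  obtain ⟨K, hK, hKM, hshift, hproj⟩ := exists_syzygy R M hR p M hext
  obtain ⟨s, f, hf⟩ := Module.Finite.exists_fin' R K
  have hL := memPerp_ker R M hR K hKM s f hf
  have hvan : ExtVanishes R M (LinearMap.ker f) (p + 1) := by
    by_contra hne
    have h1 : (((p + 1 : ℕ) : ℕ∞) : WithBot ℕ∞) ≤ extP R M (LinearMap.ker f) :=
      le_sSup ⟨p + 1, hne, rfl⟩
    have h2 : extP R M (LinearMap.ker f) ≤ extPsup R M :=
      le_sSup ⟨LinearMap.ker f, _, _, inferInstance, hL, rfl⟩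
    have h3 := WithBot.coe_lt_coe.1 ((h1.trans h2).trans_lt hp)
    exact absurd (by exact_mod_cast h3 : p + 1 < p) (by omega)
  have h1 := (extVanishes_succ_iff R M _ p).1 hvan
  have hKp : Module.Projective R K := projective_of_ext_ker R K s f hf
    (hshift _ 0 (by rwa [show 0 + 1 + p = p + 1 by omega]))
  have hle : projdim R M ≤ (p : ℕ∞) := sInf_le ⟨p, hproj hKp, rfl⟩
  exact hle.trans_lt (ENat.natCast_lt_top p)
end

section
/- Let (R, 𝔪, k) be a commutative noetherian local ring with residue field k. Then AB-dim_R k < ∞ if and only if R is Gorenstein. -/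
/-!
The equivalence rests on two dimension-shifting arguments, carried out with `Abelian.Ext`; positive
degrees of the derived-functor `Ext` of the definitions are compared with it through projective
resolutions (`extVanishes_iff`).

*Finite AB-dimension implies Gorenstein.* Only `G-dim k = n < ∞` is needed. Since totally reflexive
modules have no higher `Ext` into `R`, shifting along the resolution gives `Ext^i(k, R) = 0` for
`i > n`. For a finite module `N` over a noetherian local ring, such vanishing against `k` spreads to
all cyclic modules by noetherian induction and Nakayama (`ExtZero.cyclic_of_residueField`), and
Baer's criterion turns this into `id N ≤ n` (`hasInjectiveDimensionLE_of_residueField`). Take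
`N = R`.

*Gorenstein implies finite AB-dimension.* Let `id R ≤ d`, and call `G` acyclic if `Ext^i(G, R) = 0`
for all `i > 0`. Dualizing free covers shows that duals and syzygies of finite acyclic modules are
acyclic and that acyclic finite modules are reflexive, hence totally reflexive. A `d`-th syzygy of
`k` is acyclic, so `G-dim k ≤ d`. If `N` is finite and `Ext^i(k, N) = 0` for large `i`, then `N` has
finite injective dimension by the result above. A finite acyclic module embeds in a finite free
module with acyclic cokernel, so iterating gives `Ext^i(G, N) = 0` for all `i > 0`; hence
`Ext^i(k, N) = 0` for `i > d`, a bound independent of `N`, and `P(k) ≤ d`.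
-/


open CategoryTheory IsLocalRing

/-- Vanishing of the derived-category `Ext^n_R(M, N)`. -/
def ExtZero (R : Type u) [CommRing R] (M : Type u) [AddCommGroup M] [Module R M]
    (N : Type u) [AddCommGroup N] [Module R N] (n : ℕ) : Prop :=
  Subsingleton (Abelian.Ext (ModuleCat.of R M) (ModuleCat.of R N) n)

/-! ### Comparison of the two definitions of Ext -/

section Comparison

variable {R : Type u} [CommRing R] {M : Type u} [AddCommGroup M] [Module R M]
  {N : Type u} [AddCommGroup N] [Module R N]

theorem extVanishes_succ_iff_s13 (n : ℕ) : ExtVanishes R M N (n + 1) ↔ ExtZero R M N (n + 1) := by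
  let P := ProjectiveResolution.of (ModuleCat.of R M)
  have h1 : ExtVanishes R M N (n + 1) ↔
      (P.complex.linearYonedaObj R (ModuleCat.of R N)).ExactAt (n + 1) := by
    rw [HomologicalComplex.exactAt_iff_isZero_homology,
      ← (P.isoExt (R := R) (n + 1) (ModuleCat.of R N)).isZero_iff, ModuleCat.isZero_iff_subsingleton]
    rfl
  rw [h1, HomologicalComplex.exactAt_iff' _ n (n + 1) (n + 2) (by simp) (by simp),
    ShortComplex.moduleCat_exact_iff]
  constructor
  · intro h
    refine subsingleton_of_forall_eq 0 fun e => ?_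
    obtain ⟨f, hf, rfl⟩ := P.extMk_surjective e (n + 2) rfl
    rw [P.extMk_eq_zero_iff f (n + 2) rfl hf n rfl]
    exact h f hf
  · intro h f hf
    have := @Subsingleton.elim _ h (P.extMk f (n + 2) rfl hf) 0
    exact (P.extMk_eq_zero_iff f (n + 2) rfl hf n rfl).1 this

theorem extVanishes_iff_s13 {n : ℕ} (hn : 0 < n) : ExtVanishes R M N n ↔ ExtZero R M N n := by
  obtain ⟨m, rfl⟩ := Nat.exists_eq_succ_of_ne_zero hn.ne'
  exact extVanishes_succ_iff_s13 m

end Comparison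

/-! ### Vanishing of Ext along short exact sequences -/

section LES

variable {R : Type u} [CommRing R] {A B C : Type u} [AddCommGroup A] [Module R A]
  [AddCommGroup B] [Module R B] [AddCommGroup C] [Module R C]
  {N : Type u} [AddCommGroup N] [Module R N]

theorem ExtZero.of_projective [Module.Projective R A] {n : ℕ} (hn : 0 < n) : ExtZero R A N n := by
  obtain ⟨m, rfl⟩ := Nat.exists_eq_succ_of_ne_zero hn.ne'
  exact Abelian.Ext.subsingleton_of_projective _ _ m

theorem ExtZero.of_subsingleton [Subsingleton A] (n : ℕ) : ExtZero R A N n := by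
  have hz : Limits.IsZero (ModuleCat.of R A) := by
    rw [ModuleCat.isZero_iff_subsingleton]; infer_instance
  refine subsingleton_of_forall_eq 0 fun e => ?_
  rw [← Abelian.Ext.mk₀_id_comp e, hz.eq_of_src (𝟙 _) 0, Abelian.Ext.mk₀_zero,
    Abelian.Ext.zero_comp]

/-- The short complex `A → B → C` of modules attached to an exact sequence `0 → A → B → C → 0`. -/
abbrev sesComplex {f : A →ₗ[R] B} {g : B →ₗ[R] C} (h : Function.Exact f g) :
    ShortComplex (ModuleCat.{u} R) :=
  ModuleCat.shortComplexOfCompEqZero f g h.linearMap_comp_eq_zero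

theorem sesComplex_shortExact {f : A →ₗ[R] B} {g : B →ₗ[R] C} (h : Function.Exact f g)
    (hf : Function.Injective f) (hg : Function.Surjective g) : (sesComplex h).ShortExact :=
  ModuleCat.shortComplex_shortExact _ h hf hg

theorem ExtZero.left {f : A →ₗ[R] B} {g : B →ₗ[R] C} (h : Function.Exact f g)
    (hf : Function.Injective f) (hg : Function.Surjective g) {n : ℕ}
    (hB : ExtZero R B N n) (hC : ExtZero R C N (n + 1)) : ExtZero R A N n := by
  refine subsingleton_of_forall_eq 0 fun e => ?_
  obtain ⟨y, rfl⟩ := Abelian.Ext.contravariant_sequence_exact₁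
    (sesComplex_shortExact h hf hg) (ModuleCat.of R N) e (add_comm 1 n) (hC.elim _ _)
  rw [hB.elim y 0, Abelian.Ext.comp_zero]

theorem ExtZero.right {f : A →ₗ[R] B} {g : B →ₗ[R] C} (h : Function.Exact f g)
    (hf : Function.Injective f) (hg : Function.Surjective g) {n : ℕ}
    (hA : ExtZero R A N n) (hB : ExtZero R B N (n + 1)) : ExtZero R C N (n + 1) := by
  refine subsingleton_of_forall_eq 0 fun e => ?_
  obtain ⟨y, rfl⟩ := Abelian.Ext.contravariant_sequence_exact₃
    (sesComplex_shortExact h hf hg) (ModuleCat.of R N) e (hB.elim _ _) (add_comm 1 n)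
  rw [hA.elim y 0, Abelian.Ext.comp_zero]

theorem ExtZero.middle {f : A →ₗ[R] B} {g : B →ₗ[R] C} (h : Function.Exact f g)
    (hf : Function.Injective f) (hg : Function.Surjective g) {n : ℕ}
    (hA : ExtZero R A N n) (hC : ExtZero R C N n) : ExtZero R B N n := by
  refine subsingleton_of_forall_eq 0 fun e => ?_
  obtain ⟨y, rfl⟩ := Abelian.Ext.contravariant_sequence_exact₂
    (sesComplex_shortExact h hf hg) (ModuleCat.of R N) e (hA.elim _ _)
  rw [hC.elim y 0, Abelian.Ext.comp_zero]

theorem ExtZero.of_linearEquiv (e : A ≃ₗ[R] B) {n : ℕ} (hA : ExtZero R A N n) :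
    ExtZero R B N n :=
  ExtZero.middle (C := PUnit.{u + 1}) (f := e.toLinearMap) (g := 0)
    (fun y => ⟨fun _ => ⟨e.symm y, by simp⟩, fun _ => rfl⟩) e.injective
    (fun y => ⟨0, Subsingleton.elim _ _⟩) hA (ExtZero.of_subsingleton n)

/-- If `Ext^1_R(C, N) = 0`, a homomorphism to `N` extends along `A → B` whenever
`0 → A → B → C → 0` is exact. -/
theorem ExtZero.exists_extension {f : A →ₗ[R] B} {g : B →ₗ[R] C} (h : Function.Exact f g)
    (hf : Function.Injective f) (hg : Function.Surjective g)
    (hC : ExtZero R C N 1) (φ : A →ₗ[R] N) : ∃ ψ : B →ₗ[R] N, ψ ∘ₗ f = φ := by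
  obtain ⟨y, hy⟩ := Abelian.Ext.contravariant_sequence_exact₁
    (sesComplex_shortExact h hf hg) (ModuleCat.of R N)
    (Abelian.Ext.mk₀ (ModuleCat.ofHom φ)) (add_comm 1 0) (hC.elim _ _)
  obtain ⟨ψ, rfl⟩ := Abelian.Ext.homEquiv₀.symm.surjective y
  rw [Abelian.Ext.homEquiv₀_symm_apply, Abelian.Ext.mk₀_comp_mk₀] at hy
  have := Abelian.Ext.homEquiv₀.symm.injective hy
  exact ⟨ψ.hom, congrArg ModuleCat.Hom.hom this⟩

theorem subsingleton_of_smul_surjective [IsLocalRing R] {E : Type u} [AddCommGroup E] [Module R E]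
    [Module.Finite R E] {r : R} (hr : r ∈ maximalIdeal R) (h : ∀ x : E, ∃ y : E, r • y = x) :
    Subsingleton E := by
  have htop : (⊤ : Submodule R E) = ⊥ := by
    refine Submodule.eq_bot_of_le_smul_of_le_jacobson_bot (maximalIdeal R) ⊤
      Module.Finite.fg_top ?_ (IsLocalRing.maximalIdeal_le_jacobson _)
    intro x _
    obtain ⟨y, rfl⟩ := h x
    exact Submodule.smul_mem_smul hr trivial
  exact (Submodule.subsingleton_iff R).1 (subsingleton_of_bot_eq_top htop.symm)

/-- If multiplication by `r` on `A` is injective with cokernel `C` and `Ext^{n+1}(C, N) = 0`, then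
multiplication by `r` is surjective on `Ext^n(A, N)`; Nakayama then gives `Ext^n(A, N) = 0`. -/
theorem ExtZero.of_smul [IsLocalRing R] [IsNoetherianRing R] [Module.Finite R A]
    [Module.Finite R N] {r : R} (hr : r ∈ maximalIdeal R) {g : A →ₗ[R] C}
    (h : Function.Exact (r • LinearMap.id : A →ₗ[R] A) g)
    (hf : Function.Injective (r • LinearMap.id : A →ₗ[R] A)) (hg : Function.Surjective g) {n : ℕ}
    (hC : ExtZero R C N (n + 1)) : ExtZero R A N n := by
  have key : ∀ x : Abelian.Ext (ModuleCat.of R A) (ModuleCat.of R N) n, ∃ y, r • y = x := by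
    intro x
    obtain ⟨y, hy⟩ := Abelian.Ext.contravariant_sequence_exact₁
      (sesComplex_shortExact h hf hg) (ModuleCat.of R N) x (add_comm 1 n) (hC.elim _ _)
    refine ⟨y, ?_⟩
    rw [← hy]
    have : ModuleCat.ofHom (r • LinearMap.id : A →ₗ[R] A) = r • 𝟙 (ModuleCat.of R A) := rfl
    simp only [this, Abelian.Ext.mk₀_smul]
    simp
  have hfin : Module.Finite R (Abelian.Ext (ModuleCat.of R A) (ModuleCat.of R N) n) :=
    ModuleCat.finite_ext R (ModuleCat.of R A) (ModuleCat.of R N) n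
  exact subsingleton_of_smul_surjective hr key

end LES

/-! ### Injective dimension -/

section InjectiveDimension

variable {R : Type u} [CommRing R]

theorem injDimLE_iff (n : ℕ) (M : ModuleCat.{u} R) :
    InjDimLE R n M ↔ HasInjectiveDimensionLE M n := by
  induction n generalizing M with
  | zero =>
    rw [HasInjectiveDimensionLE, zero_add, ← injective_iff_hasInjectiveDimensionLT_one]
    exact Module.injective_iff_injective_object R M
  | succ n ih =>
    have step : ∀ (I : ModuleCat.{u} R), Module.Injective R I → ∀ f : M →ₗ[R] I,
        Function.Injective f → (InjDimLE R n (ModuleCat.of R (I ⧸ LinearMap.range f)) ↔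
          HasInjectiveDimensionLE M (n + 1)) := by
      intro I hI f hf
      rw [ih]
      exact (sesComplex_shortExact f.exact_map_mkQ_range hf
        (Submodule.mkQ_surjective _)).hasInjectiveDimensionLT_X₃_iff n
          ((Module.injective_iff_injective_object R I).1 hI)
    constructor
    · rintro ⟨I, hI, f, hf, h⟩
      exact (step I hI f hf).1 h
    · intro h
      obtain ⟨I, _, f, _⟩ := EnoughInjectives.presentation M
      have hI : Module.Injective R I := Module.injective_module_of_injective_object R I
      have hf : Function.Injective f.hom := (ModuleCat.mono_iff_injective f).mp ‹_›
      exact ⟨I, hI, f.hom, hf, (step I hI f.hom hf).2 h⟩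

theorem ExtZero.of_hasInjectiveDimensionLE {N : Type u} [AddCommGroup N] [Module R N] {d : ℕ}
    (h : HasInjectiveDimensionLE (ModuleCat.of R N) d) (M : Type u) [AddCommGroup M] [Module R M]
    {n : ℕ} (hn : d < n) : ExtZero R M N n :=
  HasInjectiveDimensionLT.subsingleton _ (d + 1) n hn _

/-- Baer's criterion for injective dimension: vanishing of `Ext^{n+1}` against cyclic modules
suffices. -/
theorem hasInjectiveDimensionLE_of_cyclic (n : ℕ) (N : ModuleCat.{u} R)
    (h : ∀ I : Ideal R, ExtZero R (R ⧸ I) N (n + 1)) : HasInjectiveDimensionLE N n := by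
  induction n generalizing N with
  | zero =>
    rw [HasInjectiveDimensionLE, zero_add, ← injective_iff_hasInjectiveDimensionLT_one]
    refine (Module.injective_iff_injective_object R N).1 (Module.Baer.injective fun I φ => ?_)
    have hex : Function.Exact I.subtype I.mkQ := LinearMap.exact_subtype_mkQ I
    obtain ⟨ψ, hψ⟩ := ExtZero.exists_extension hex I.injective_subtype I.mkQ_surjective (h I) φ
    exact ⟨ψ, fun x hx => LinearMap.congr_fun hψ ⟨x, hx⟩⟩
  | succ n ih =>
    obtain ⟨E, _, f, _⟩ := EnoughInjectives.presentation N
    have hf : Function.Injective f.hom := (ModuleCat.mono_iff_injective f).mp ‹_›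
    have hS := sesComplex_shortExact f.hom.exact_map_mkQ_range hf (Submodule.mkQ_surjective _)
    refine (hS.hasInjectiveDimensionLT_X₃_iff n ‹_›).1 (ih _ fun I => ?_)
    refine subsingleton_of_forall_eq 0 fun e => ?_
    obtain ⟨y, rfl⟩ := Abelian.Ext.covariant_sequence_exact₃ (ModuleCat.of R (R ⧸ I)) hS e
      rfl ((h I).elim _ _)
    rw [Abelian.Ext.eq_zero_of_injective y, Abelian.Ext.zero_comp]

/-- Over a local ring, vanishing of `Ext^n(k, N)` for all `n > d` propagates to every cyclic
module. By noetherian induction, pick `x ∈ 𝔪 \ I`: the sequence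
`0 → R/(I : x) → R/I → R/(I + x) → 0` reduces to larger ideals unless `(I : x) = I`, and in that
case `x` is regular on `R/I` and Nakayama applies to multiplication by `x` on `Ext^n(R/I, N)`. -/
theorem ExtZero.cyclic_of_residueField [IsLocalRing R] [IsNoetherianRing R] {N : Type u}
    [AddCommGroup N] [Module R N] [Module.Finite R N] {d : ℕ}
    (h : ∀ n > d, ExtZero R (ResidueField R) N n) (I : Ideal R) :
    ∀ n > d, ExtZero R (R ⧸ I) N n := by
  induction I using IsNoetherian.induction with
  | hgt I ih =>
  intro n hn
  by_cases htop : I = ⊤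
  · subst htop
    have : Subsingleton (R ⧸ (⊤ : Ideal R)) := Ideal.Quotient.subsingleton_iff.2 rfl
    exact ExtZero.of_subsingleton n
  by_cases hmax : maximalIdeal R ≤ I
  · obtain rfl : I = maximalIdeal R := le_antisymm (IsLocalRing.le_maximalIdeal htop) hmax
    exact h n hn
  obtain ⟨x, hxm, hxI⟩ := Set.not_subset.1 hmax
  have hlt : I < I ⊔ Ideal.span {x} := by
    refine lt_of_le_of_ne le_sup_left fun he => hxI ?_
    rw [he]
    exact Ideal.mem_sup_right (Ideal.mem_span_singleton_self x)
  let g : (R ⧸ I) →ₗ[R] (R ⧸ (I ⊔ Ideal.span {x})) := Submodule.factor le_sup_left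
  have hg : Function.Surjective g := Submodule.factor_surjective _
  -- the colon ideal `(I : x)`
  let J : Ideal R := LinearMap.ker (I.mkQ ∘ₗ LinearMap.toSpanSingleton R R x)
  have hJ : ∀ a, a ∈ J ↔ a * x ∈ I := fun a => Submodule.Quotient.mk_eq_zero I
  let f : (R ⧸ J) →ₗ[R] (R ⧸ I) := J.liftQ (I.mkQ ∘ₗ LinearMap.toSpanSingleton R R x) le_rfl
  have hf : Function.Injective f := by
    rw [← LinearMap.ker_eq_bot]
    exact Submodule.ker_liftQ_eq_bot _ _ _ le_rfl
  have hfapp : ∀ a : R, f (J.mkQ a) = I.mkQ (a * x) := fun a => rfl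
  have hex : Function.Exact f g := by
    intro b
    obtain ⟨b, rfl⟩ := I.mkQ_surjective b
    have hgb : g (I.mkQ b) = (I ⊔ Ideal.span {x}).mkQ b := rfl
    rw [hgb, Submodule.mkQ_apply, Submodule.Quotient.mk_eq_zero]
    constructor
    · intro hb
      obtain ⟨i, hi, y, hy, rfl⟩ := Submodule.mem_sup.1 hb
      obtain ⟨a, rfl⟩ := Ideal.mem_span_singleton'.1 hy
      refine ⟨J.mkQ a, ?_⟩
      rw [hfapp, Submodule.mkQ_apply, Submodule.mkQ_apply, Submodule.Quotient.eq]
      simpa using hi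
    · rintro ⟨a, ha⟩
      obtain ⟨a, rfl⟩ := J.mkQ_surjective a
      rw [hfapp, Submodule.mkQ_apply, Submodule.mkQ_apply, Submodule.Quotient.eq] at ha
      rw [show b = -(a * x - b) + a * x by ring]
      exact add_mem (Ideal.mem_sup_left (neg_mem ha))
        (Ideal.mem_sup_right (Ideal.mul_mem_left _ _ (Ideal.mem_span_singleton_self x)))
  have hIJ : I ≤ J := fun a ha => (hJ a).2 (Ideal.mul_mem_right x I ha)
  rcases hIJ.lt_or_eq with hlt' | heq
  · exact ExtZero.middle hex hf hg (ih J hlt' n hn) (ih _ hlt n hn)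
  · have hfx : ∀ a : R, (x • LinearMap.id : (R ⧸ I) →ₗ[R] (R ⧸ I)) (I.mkQ a) = I.mkQ (a * x) := by
      intro a
      simp [mul_comm a x, ← smul_eq_mul]
    refine ExtZero.of_smul hxm (g := g) ?_ ?_ hg (ih _ hlt (n + 1) (by omega))
    · intro b
      rw [hex b]
      constructor
      · rintro ⟨a, rfl⟩
        obtain ⟨a, rfl⟩ := J.mkQ_surjective a
        exact ⟨I.mkQ a, by rw [hfx, hfapp]⟩
      · rintro ⟨a, rfl⟩
        obtain ⟨a, rfl⟩ := I.mkQ_surjective a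
        exact ⟨J.mkQ a, by rw [hfx, hfapp]⟩
    · rw [injective_iff_map_eq_zero]
      intro a ha
      obtain ⟨a, rfl⟩ := I.mkQ_surjective a
      rw [hfx, Submodule.mkQ_apply, Submodule.Quotient.mk_eq_zero] at ha
      rw [Submodule.mkQ_apply, Submodule.Quotient.mk_eq_zero, heq]
      exact (hJ a).2 ha

theorem hasInjectiveDimensionLE_of_residueField [IsLocalRing R] [IsNoetherianRing R] {N : Type u}
    [AddCommGroup N] [Module R N] [Module.Finite R N] {d : ℕ}
    (h : ∀ n > d, ExtZero R (ResidueField R) N n) :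
    HasInjectiveDimensionLE (ModuleCat.of R N) d :=
  hasInjectiveDimensionLE_of_cyclic d _ fun I =>
    ExtZero.cyclic_of_residueField h I (d + 1) (Nat.lt_succ_self d)

end InjectiveDimension

/-! ### Biduality -/

section Duality

variable {R : Type u} [CommRing R] {A B C : Type u} [AddCommGroup A] [Module R A]
  [AddCommGroup B] [Module R B] [AddCommGroup C] [Module R C] {f : A →ₗ[R] B} {g : B →ₗ[R] C}

theorem exact_dualMap (h : Function.Exact f g) (hg : Function.Surjective g) :
    Function.Exact g.dualMap f.dualMap := by
  intro φ
  constructor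
  · intro hφ
    have hker : LinearMap.ker g ≤ LinearMap.ker φ := by
      intro b hb
      obtain ⟨a, rfl⟩ := (h b).1 hb
      exact LinearMap.congr_fun hφ a
    refine ⟨(LinearMap.ker g).liftQ φ hker ∘ₗ (g.quotKerEquivOfSurjective hg).symm, ?_⟩
    ext b
    have hb : (g.quotKerEquivOfSurjective hg).symm (g b) = (LinearMap.ker g).mkQ b := by
      rw [LinearEquiv.symm_apply_eq]
      simp
    simp [LinearMap.dualMap_apply, hb]
  · rintro ⟨ψ, rfl⟩
    ext a
    simp [LinearMap.dualMap_apply, h.apply_apply_eq_zero]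

theorem surjective_dualMap (h : Function.Exact f g) (hf : Function.Injective f)
    (hg : Function.Surjective g) (hC : ExtZero R C R 1) : Function.Surjective f.dualMap :=
  fun φ => ExtZero.exists_extension h hf hg hC φ

/-- For `0 → A → B → C → 0` with `Ext^1(C, R) = 0 = Ext^1(A*, R)`, the map `B** → C**` is onto, so
surjectivity of biduality passes from `B` to `C`. -/
theorem surjective_eval (h : Function.Exact f g) (hf : Function.Injective f)
    (hg : Function.Surjective g) (hC : ExtZero R C R 1) (hA : ExtZero R (Module.Dual R A) R 1)
    (hB : Function.Surjective (Module.Dual.eval R B)) :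
    Function.Surjective (Module.Dual.eval R C) := by
  intro c
  obtain ⟨b, rfl⟩ := surjective_dualMap (exact_dualMap h hg)
    (LinearMap.dualMap_injective_of_surjective hg) (surjective_dualMap h hf hg hC) hA c
  obtain ⟨b, rfl⟩ := hB b
  exact ⟨g b, rfl⟩

/-- For `0 → A → B → C → 0` with `Ext^1(C, R) = 0`, the sequence `A** → B** → C**` is exact, so a
diagram chase gives injectivity of biduality for `C`. -/
theorem injective_eval (h : Function.Exact f g) (hf : Function.Injective f)
    (hg : Function.Surjective g) (hC : ExtZero R C R 1)
    (hA : Function.Surjective (Module.Dual.eval R A))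
    (hB : Function.Injective (Module.Dual.eval R B)) :
    Function.Injective (Module.Dual.eval R C) := by
  rw [injective_iff_map_eq_zero]
  intro c hc
  obtain ⟨b, rfl⟩ := hg c
  have hb : g.dualMap.dualMap (Module.Dual.eval R B b) = 0 := hc
  obtain ⟨a, ha⟩ := (exact_dualMap (exact_dualMap h hg) (surjective_dualMap h hf hg hC) _).1 hb
  obtain ⟨a, rfl⟩ := hA a
  have hab : Module.Dual.eval R B (f a) = Module.Dual.eval R B b := ha
  rw [← hB hab, h.apply_apply_eq_zero]

end Duality

/-! ### Acyclic modules over a ring of finite self-injective dimension -/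

section Acyclic

variable {R : Type u} [CommRing R]

/-- `Ext^i_R(G, R) = 0` for all `i > 0`. Over a ring of finite self-injective dimension the finite
modules with this property are exactly the totally reflexive ones. -/
def ExtAcyclic (R : Type u) [CommRing R] (G : Type u) [AddCommGroup G] [Module R G] : Prop :=
  ∀ i > 0, ExtZero R G R i

theorem ExtAcyclic.left {A B C : Type u} [AddCommGroup A] [Module R A]
    [AddCommGroup B] [Module R B] [AddCommGroup C] [Module R C] {f : A →ₗ[R] B} {g : B →ₗ[R] C}
    (h : Function.Exact f g) (hf : Function.Injective f) (hg : Function.Surjective g)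
    (hB : ExtAcyclic R B) (hC : ExtAcyclic R C) : ExtAcyclic R A :=
  fun i hi => ExtZero.left h hf hg (hB i hi) (hC (i + 1) (Nat.succ_pos i))

theorem ExtAcyclic.of_projective {P : Type u} [AddCommGroup P] [Module R P]
    [Module.Projective R P] : ExtAcyclic R P := fun _ hi => ExtZero.of_projective hi

/-- A finite module over a noetherian ring is the cokernel in `0 → K → F → G → 0` with `F` finite
free and `K` finite. -/
theorem exists_finite_cover [IsNoetherianRing R] (G : Type u) [AddCommGroup G] [Module R G]
    [Module.Finite R G] : ∃ (F K : Type u) (_ : AddCommGroup F) (_ : Module R F)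
      (_ : AddCommGroup K) (_ : Module R K) (f : K →ₗ[R] F) (g : F →ₗ[R] G),
      Module.Free R F ∧ Module.Finite R F ∧ Module.Finite R K ∧ Function.Exact f g ∧
      Function.Injective f ∧ Function.Surjective g := by
  obtain ⟨F, _, _, _, _, g, hg⟩ := Module.exists_finite_presentation R G
  exact ⟨F, LinearMap.ker g, _, _, _, _, (LinearMap.ker g).subtype, g, inferInstance,
    inferInstance, inferInstance, g.exact_subtype_ker_map, Submodule.injective_subtype _, hg⟩

variable [IsNoetherianRing R] {d : ℕ}

/-- If `R` has finite self-injective dimension, duals of `Ext`-acyclic finite modules are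
`Ext`-acyclic: dualizing `0 → K → F → G → 0` shows `Ext^i(G*, R) ≅ Ext^{i+1}(K*, R)` with `K` again
acyclic, so the degree can be raised beyond the injective dimension. -/
theorem ExtAcyclic.dual (hd : HasInjectiveDimensionLE (ModuleCat.of R R) d)
    {G : Type u} [AddCommGroup G] [Module R G] [Module.Finite R G]
    (hG : ExtAcyclic R G) : ExtAcyclic R (Module.Dual R G) := by
  suffices H : ∀ (c : ℕ) (G : Type u) [AddCommGroup G] [Module R G] [Module.Finite R G],
      ExtAcyclic R G → ∀ i > 0, d < i + c → ExtZero R (Module.Dual R G) R i from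
    fun i hi => H (d + 1) G hG i hi (by omega)
  intro c
  induction c with
  | zero => exact fun G _ _ _ _ i _ h => ExtZero.of_hasInjectiveDimensionLE hd _ h
  | succ c ih =>
    intro G _ _ _ hG i hi h
    obtain ⟨F, K, _, _, _, _, f, g, _, _, _, hex, hf, hg⟩ := exists_finite_cover (R := R) G
    have hK : ExtAcyclic R K := ExtAcyclic.left hex hf hg ExtAcyclic.of_projective hG
    exact ExtZero.left (exact_dualMap hex hg) (LinearMap.dualMap_injective_of_surjective hg)
      (surjective_dualMap hex hf hg (hG 1 one_pos)) (ExtZero.of_projective hi)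
      (ih K hK (i + 1) (Nat.succ_pos i) (by omega))

theorem ExtAcyclic.bijective_eval (hd : HasInjectiveDimensionLE (ModuleCat.of R R) d)
    {G : Type u} [AddCommGroup G] [Module R G] [Module.Finite R G]
    (hG : ExtAcyclic R G) : Function.Bijective (Module.Dual.eval R G) := by
  have hsurj : ∀ (G : Type u) [AddCommGroup G] [Module R G] [Module.Finite R G],
      ExtAcyclic R G → Function.Surjective (Module.Dual.eval R G) := by
    intro G _ _ _ hG
    obtain ⟨F, K, _, _, _, _, f, g, _, _, _, hex, hf, hg⟩ := exists_finite_cover (R := R) G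
    have hK : ExtAcyclic R K := ExtAcyclic.left hex hf hg ExtAcyclic.of_projective hG
    exact surjective_eval hex hf hg (hG 1 one_pos) (hK.dual hd 1 one_pos)
      (Module.bijective_dual_eval R F).2
  refine ⟨?_, hsurj G hG⟩
  obtain ⟨F, K, _, _, _, _, f, g, _, _, _, hex, hf, hg⟩ := exists_finite_cover (R := R) G
  have hK : ExtAcyclic R K := ExtAcyclic.left hex hf hg ExtAcyclic.of_projective hG
  exact injective_eval hex hf hg (hG 1 one_pos) (hsurj K hK) (Module.bijective_dual_eval R F).1

theorem ExtAcyclic.isTotallyReflexive (hd : HasInjectiveDimensionLE (ModuleCat.of R R) d)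
    {G : Type u} [AddCommGroup G] [Module R G]
    [Module.Finite R G] (hG : ExtAcyclic R G) : IsTotallyReflexive R G :=
  ⟨hG.bijective_eval hd, fun n hn => (extVanishes_iff_s13 hn).2 (hG n hn),
    fun n hn => (extVanishes_iff_s13 hn).2 (hG.dual hd n hn)⟩

/-- When `id R` is finite and `Ext^i(M, R) = 0` for all `i > n`, an `n`-th syzygy of `M` is acyclic,
hence totally reflexive, so `M` has G-dimension at most `n`. -/
theorem gdimLE_of_extZero (hd : HasInjectiveDimensionLE (ModuleCat.of R R) d)
    (n : ℕ) (M : Type u) [AddCommGroup M] [Module R M] [Module.Finite R M]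
    (hM : ∀ i > n, ExtZero R M R i) : GdimLE R n (ModuleCat.of R M) := by
  induction n generalizing M with
  | zero => exact ExtAcyclic.isTotallyReflexive hd hM
  | succ n ih =>
    obtain ⟨F, _, _, _, _, g, hg⟩ := Module.exists_finite_presentation R M
    refine ⟨ModuleCat.of R F, ‹_›,
      ExtAcyclic.isTotallyReflexive hd ExtAcyclic.of_projective, g, hg, ?_⟩
    refine ih (LinearMap.ker g) fun i hi => ?_
    exact ExtZero.left g.exact_subtype_ker_map (Submodule.injective_subtype _) hg
      (ExtZero.of_projective (by omega)) (hM (i + 1) (by omega))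

/-- An `Ext`-acyclic finite module `G ≅ G**` embeds in a finite free module with `Ext`-acyclic
cokernel `K*`, where `0 → K → F → G* → 0`; this shifts `Ext^i(G, N)` to `Ext^{i+1}(K*, N)`, which
eventually vanishes when `N` has finite injective dimension. -/
theorem ExtAcyclic.extZero_of_injDim (hd : HasInjectiveDimensionLE (ModuleCat.of R R) d)
    {N : Type u} [AddCommGroup N] [Module R N] {m : ℕ}
    (hm : HasInjectiveDimensionLE (ModuleCat.of R N) m) {G : Type u} [AddCommGroup G] [Module R G]
    [Module.Finite R G] (hG : ExtAcyclic R G) : ∀ i > 0, ExtZero R G N i := by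
  suffices H : ∀ (c : ℕ) (G : Type u) [AddCommGroup G] [Module R G] [Module.Finite R G],
      ExtAcyclic R G → ∀ i > 0, m < i + c → ExtZero R G N i from
    fun i hi => H (m + 1) G hG i hi (by omega)
  intro c
  induction c with
  | zero => exact fun G _ _ _ _ i _ h => ExtZero.of_hasInjectiveDimensionLE hm _ h
  | succ c ih =>
    intro G _ _ _ hG i hi h
    have hG' := hG.dual hd
    obtain ⟨F, K, _, _, _, _, f, g, _, _, _, hex, hf, hg⟩ :=
      exists_finite_cover (R := R) (Module.Dual R G)
    have hK : ExtAcyclic R K := ExtAcyclic.left hex hf hg ExtAcyclic.of_projective hG'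
    have hGG : ExtZero R (Module.Dual R (Module.Dual R G)) N i :=
      ExtZero.left (exact_dualMap hex hg) (LinearMap.dualMap_injective_of_surjective hg)
        (surjective_dualMap hex hf hg (hG' 1 one_pos)) (ExtZero.of_projective hi)
        (ih _ (hK.dual hd) (i + 1) (Nat.succ_pos i) (by omega))
    exact hGG.of_linearEquiv (LinearEquiv.ofBijective _ (hG.bijective_eval hd)).symm

/-- If `id R ≤ d < ∞` and `id N < ∞`, the vanishing of `Ext^i(M, R)` for `i > n` forces that of
`Ext^i(M, N)` for `i > n`: the bound does not depend on `id N`. -/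
theorem extZero_of_injDim (hd : HasInjectiveDimensionLE (ModuleCat.of R R) d)
    {N : Type u} [AddCommGroup N] [Module R N] {m : ℕ}
    (hm : HasInjectiveDimensionLE (ModuleCat.of R N) m) (n : ℕ) (M : Type u) [AddCommGroup M]
    [Module R M] [Module.Finite R M] (hM : ∀ i > n, ExtZero R M R i) :
    ∀ i > n, ExtZero R M N i := by
  induction n generalizing M with
  | zero => exact ExtAcyclic.extZero_of_injDim hd hm hM
  | succ n ih =>
    intro i hi
    obtain ⟨F, K, _, _, _, _, f, g, _, _, _, hex, hf, hg⟩ := exists_finite_cover (R := R) M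
    obtain ⟨j, rfl⟩ : ∃ j, i = j + 1 := ⟨i - 1, by omega⟩
    refine ExtZero.right hex hf hg (ih K (fun i hi => ?_) j (by omega))
      (ExtZero.of_projective (Nat.succ_pos j))
    exact ExtZero.left hex hf hg (ExtZero.of_projective (by omega)) (hM (i + 1) (by omega))

end Acyclic

/-- Since `Ext^i(G, R) = 0` for `i > 0` and `G` totally reflexive, G-dimension at most `n` gives
`Ext^i(M, R) = 0` for `i > n`. -/
theorem extZero_of_gdimLE {R : Type u} [CommRing R] (n : ℕ) (M : ModuleCat.{u} R)
    (h : GdimLE R n M) : ∀ i > n, ExtZero R M R i := by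
  induction n generalizing M with
  | zero => exact fun i hi => (extVanishes_iff_s13 hi).1 (h.2.1 i hi)
  | succ n ih =>
    intro i hi
    obtain ⟨G, _, hG, f, hf, hK⟩ := h
    obtain ⟨j, rfl⟩ : ∃ j, i = j + 1 := ⟨i - 1, by omega⟩
    exact ExtZero.right f.exact_subtype_ker_map (Submodule.injective_subtype _) hf
      (ih _ hK j (by omega)) ((extVanishes_iff_s13 (Nat.succ_pos j)).1 (hG.2.1 _ (Nat.succ_pos j)))

/-- Remark 2.3(4), last assertion: `AB-dim_R k < ∞` if and only if `R` is Gorenstein. -/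
theorem statement13 (R : Type u) [CommRing R] [IsLocalRing R] [IsNoetherianRing R] :
    abdim R (ResidueField R) < ⊤ ↔ IsGorensteinRing R := by
  have hfin : Module.Finite R (ResidueField R) :=
    Module.Finite.of_surjective (Algebra.linearMap R (ResidueField R)) residue_surjective
  constructor
  · intro h
    have hg : gdim R (ResidueField R) < ⊤ :=
      WithBot.coe_lt_coe.1 (lt_of_le_of_lt (le_max_left _ _) h)
    obtain ⟨_, ⟨n, hn, rfl⟩, _⟩ := sInf_lt_iff.1 hg
    exact ⟨n, (injDimLE_iff n _).2 (hasInjectiveDimensionLE_of_residueField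
      (extZero_of_gdimLE n _ hn))⟩
  · rintro ⟨d, h⟩
    have hd := (injDimLE_iff d _).1 h
    have hk : ∀ i > d, ExtZero R (ResidueField R) R i :=
      fun i hi => ExtZero.of_hasInjectiveDimensionLE hd _ hi
    have hg : gdim R (ResidueField R) ≤ d := sInf_le ⟨d, gdimLE_of_extZero hd d _ hk, rfl⟩
    have hp : extPsup R (ResidueField R) ≤ ((d : ℕ∞) : WithBot ℕ∞) := by
      refine sSup_le ?_
      rintro _ ⟨N, _, _, hN, ⟨m, hm⟩, rfl⟩
      have hNm : HasInjectiveDimensionLE (ModuleCat.of R N) m :=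
        hasInjectiveDimensionLE_of_residueField fun n hn =>
          (extVanishes_iff_s13 (by omega)).1 (hm n hn.le)
      refine sSup_le ?_
      rintro _ ⟨n, hn, rfl⟩
      by_contra hlt
      have hdn : d < n := by
        by_contra hdn
        exact hlt (by exact_mod_cast not_lt.1 hdn)
      exact hn ((extVanishes_iff_s13 (by omega)).2 (extZero_of_injDim hd hNm d _ hk n hdn))
    exact lt_of_le_of_lt (max_le (WithBot.coe_le_coe.2 hg) hp)
      (WithBot.coe_lt_coe.2 (ENat.natCast_lt_top d))
end
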